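/- arXiv:1909.06648 — 8 statements merged into one kernel-verified Lean document; each statement's English description precedes it below -/
import Mathlib

section
/- Let (a,b) ∈ [0,1]² and let c satisfy 0 ≤ c ≤ min{a,b,1−a,1−b}. Then the function C̲^{(a,b)}_c is a copula, i.e. it satisfies C̲^{(a,b)}_c(u,0) = C̲^{(a,b)}_c(0,v) = 0, C̲^{(a,b)}_c(u,1) = u and C̲^{(a,b)}_c(1,v) = v for all u,v ∈ [0,1], and it is 2-increasing. -/
open Set MeasureTheory intervalIntegral

/-- A bivariate copula: boundary conditions plus the 2-increasing property. -/
def IsCopula (C : ℝ → ℝ → ℝ) : Prop :=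
  (∀ u ∈ Set.Icc (0:ℝ) 1, C u 0 = 0 ∧ C 0 u = 0 ∧ C u 1 = u ∧ C 1 u = u) ∧
  ∀ u₁ u₂ v₁ v₂ : ℝ, 0 ≤ u₁ → u₁ ≤ u₂ → u₂ ≤ 1 → 0 ≤ v₁ → v₁ ≤ v₂ → v₂ ≤ 1 →
    0 ≤ C u₂ v₂ - C u₂ v₁ - C u₁ v₂ + C u₁ v₁

/-- The lower bound function C̲^{(a,b)}_c. -/
noncomputable def lowerC (a b c : ℝ) : ℝ → ℝ → ℝ := fun u v =>
  max (max (u + v - 1) 0)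
    (min (min (max (a + b - 1) 0 + c) (u - a + (max (a + b - 1) 0 + c)))
      (min (v - b + (max (a + b - 1) 0 + c)) (u + v - a - b + (max (a + b - 1) 0 + c))))

/-- The upper bound function C̄^{(a,b)}_c. -/
noncomputable def upperC (a b c : ℝ) : ℝ → ℝ → ℝ := fun u v =>
  min (min u v)
    (max (max (min a b - c) (u - b + (min a b - c)))
      (max (v - a + (min a b - c)) (u + v - a - b + (min a b - c))))

/-- Spearman's rho of a copula. -/
noncomputable def spearmanRho (C : ℝ → ℝ → ℝ) : ℝ :=
  12 * (∫ u in (0:ℝ)..1, ∫ v in (0:ℝ)..1, C u v) - 3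

/-- Spearman's footrule of a copula. -/
noncomputable def spearmanFootrule (C : ℝ → ℝ → ℝ) : ℝ :=
  6 * (∫ u in (0:ℝ)..1, C u u) - 2

/-- Gini's gamma of a copula. -/
noncomputable def giniGamma (C : ℝ → ℝ → ℝ) : ℝ :=
  4 * (∫ u in (0:ℝ)..1, (C u u + C u (1 - u))) - 2

/-- Blomqvist's beta of a copula. -/
noncomputable def blomqvistBeta (C : ℝ → ℝ → ℝ) : ℝ :=
  4 * C (1/2) (1/2) - 1

/-!
The lower bound is `W ∨ (d - (a - u)⁺ - (b - v)⁺)` with `W u v = max (u + v - 1) 0` and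
`d = max (a + b - 1) 0 + c`. A maximum of 2-increasing functions need not be 2-increasing, but on
the half-planes `u ≤ a` and `v ≤ b` and on the remaining quadrant this one has the form
`φ (f u + g v)` with `φ` convex and `f`, `g` monotone. Such functions are 2-increasing: the two
diagonals of a rectangle give the same sum of arguments, and those on the main diagonal are the
more spread out. Since rectangle volumes are additive, the property passes from the pieces to the
plane.
-/

section TwoIncreasing

variable {α β G : Type*} [Preorder α] [Preorder β] [AddCommGroup G] [PartialOrder G]

/-- The 2-increasing property of `C` on `s × t`: rectangles with corners in `s × t` have nonnegative
`C`-volume. It is encoded as monotonicity of the increments in the first variable. -/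
def IsTwoIncreasingOn (C : α → β → G) (s : Set α) (t : Set β) : Prop :=
  ∀ ⦃u₁⦄, u₁ ∈ s → ∀ ⦃u₂⦄, u₂ ∈ s → u₁ ≤ u₂ → MonotoneOn (fun v ↦ C u₂ v - C u₁ v) t

namespace IsTwoIncreasingOn

variable {C C' : α → β → G} {s s' : Set α} {t t' : Set β}

theorem mono (h : IsTwoIncreasingOn C s t) (hs : s' ⊆ s) (ht : t' ⊆ t) :
    IsTwoIncreasingOn C s' t' :=
  fun _ hu₁ _ hu₂ hu ↦ (h (hs hu₁) (hs hu₂) hu).mono ht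

theorem congr (h : IsTwoIncreasingOn C s t) (hC : ∀ u ∈ s, ∀ v ∈ t, C u v = C' u v) :
    IsTwoIncreasingOn C' s t :=
  fun u₁ hu₁ u₂ hu₂ hu ↦ (h hu₁ hu₂ hu).congr fun v hv ↦ by
    simp only [hC u₁ hu₁ v hv, hC u₂ hu₂ v hv]

theorem swap [IsOrderedAddMonoid G] (h : IsTwoIncreasingOn C s t) :
    IsTwoIncreasingOn (fun v u ↦ C u v) t s := by
  intro v₁ hv₁ v₂ hv₂ hv u₁ hu₁ u₂ hu₂ hu
  have hrect : C u₂ v₁ - C u₁ v₁ ≤ C u₂ v₂ - C u₁ v₂ := h hu₁ hu₂ hu hv₁ hv₂ hv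
  exact sub_le_sub_iff.2 ((add_comm _ _).trans_le (sub_le_sub_iff.1 hrect))

end IsTwoIncreasingOn

theorem IsTwoIncreasingOn.univ_right {β : Type*} [LinearOrder β] {C : α → β → G} {s : Set α} {b : β}
    (hl : IsTwoIncreasingOn C s (Iic b)) (hr : IsTwoIncreasingOn C s (Ici b)) :
    IsTwoIncreasingOn C s univ :=
  fun _ hu₁ _ hu₂ hu ↦ ((hl hu₁ hu₂ hu).Iic_union_Ici (hr hu₁ hu₂ hu)).monotoneOn univ

theorem IsTwoIncreasingOn.univ_left [IsOrderedAddMonoid G] {α : Type*} [LinearOrder α]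
    {C : α → β → G} {t : Set β} {a : α}
    (hl : IsTwoIncreasingOn C (Iic a) t) (hr : IsTwoIncreasingOn C (Ici a) t) :
    IsTwoIncreasingOn C univ t :=
  (hl.swap.univ_right hr.swap).swap

end TwoIncreasing

section Convex

theorem map_add_map_le_of_convexOn_of_mem_segment {𝕜 E G : Type*}
    [Semiring 𝕜] [PartialOrder 𝕜] [AddCommGroup E] [Module 𝕜 E]
    [AddCommGroup G] [PartialOrder G] [IsOrderedAddMonoid G] [Module 𝕜 G]
    {φ : E → G} {I : Set E} (hφ : ConvexOn 𝕜 I φ) {x y y' z : E} (hx : x ∈ I) (hz : z ∈ I)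
    (hy : y ∈ segment 𝕜 x z) (hsum : y + y' = x + z) :
    φ y + φ y' ≤ φ x + φ z := by
  obtain ⟨p, q, hp, hq, hpq, rfl⟩ := hy
  have hy' : y' = q • x + p • z := by
    rw [← add_right_inj (p • x + q • z), hsum, add_add_add_comm, ← add_smul, ← add_smul,
      add_comm q, hpq, one_smul, one_smul]
  subst hy'
  calc φ (p • x + q • z) + φ (q • x + p • z)
      ≤ (p • φ x + q • φ z) + (q • φ x + p • φ z) :=
        add_le_add (hφ.2 hx hz hp hq hpq) (hφ.2 hx hz hq hp (by rwa [add_comm]))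
    _ = φ x + φ z := by
        rw [add_add_add_comm, ← add_smul, ← add_smul, add_comm q, hpq, one_smul, one_smul]

variable {α β 𝕜 G : Type*} [Preorder α] [Preorder β] [Field 𝕜] [LinearOrder 𝕜]
  [IsStrictOrderedRing 𝕜] {s : Set α} {t : Set β} {f : α → 𝕜} {g : β → 𝕜}

theorem isTwoIncreasingOn_of_convexOn
    [AddCommGroup G] [PartialOrder G] [IsOrderedAddMonoid G] [Module 𝕜 G]
    {φ : 𝕜 → G} {I : Set 𝕜} (hφ : ConvexOn 𝕜 I φ) (hf : MonotoneOn f s) (hg : MonotoneOn g t)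
    (hI : ∀ u ∈ s, ∀ v ∈ t, f u + g v ∈ I) :
    IsTwoIncreasingOn (fun u v ↦ φ (f u + g v)) s t := by
  intro u₁ hu₁ u₂ hu₂ hu v₁ hv₁ v₂ hv₂ hv
  have hfu : f u₁ ≤ f u₂ := hf hu₁ hu₂ hu
  have hgv : g v₁ ≤ g v₂ := hg hv₁ hv₂ hv
  have hmem : f u₂ + g v₁ ∈ segment 𝕜 (f u₁ + g v₁) (f u₂ + g v₂) := by
    rw [segment_eq_Icc (by gcongr)]
    exact ⟨by gcongr, by gcongr⟩
  rw [sub_le_sub_iff, add_comm (φ (f u₂ + g v₂))]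
  exact map_add_map_le_of_convexOn_of_mem_segment hφ (hI _ hu₁ _ hv₁) (hI _ hu₂ _ hv₂) hmem
    (by ring)

theorem isTwoIncreasingOn_max_add (p : 𝕜) (hf : MonotoneOn f s) (hg : MonotoneOn g t) :
    IsTwoIncreasingOn (fun u v ↦ max p (f u + g v)) s t :=
  isTwoIncreasingOn_of_convexOn ((convexOn_const p convex_univ).sup (convexOn_id convex_univ))
    hf hg fun _ _ _ _ ↦ mem_univ _

end Convex

/-- The pointwise lower bound for copulas taking the value `d` at `(a, b)`, in its classical form
with positive parts. Taking `d` as the parameter, instead of its excess `c` over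
`max (a + b - 1) 0`, makes the formula symmetric under swapping the two coordinates. -/
noncomputable def copulaLowerBoundAt (a b d u v : ℝ) : ℝ :=
  max (max (u + v - 1) 0) (d - (a - u)⁺ - (b - v)⁺)

theorem copulaLowerBoundAt_swap (a b d u v : ℝ) :
    copulaLowerBoundAt b a d v u = copulaLowerBoundAt a b d u v := by
  rw [copulaLowerBoundAt, copulaLowerBoundAt, add_comm v u, sub_right_comm]

section Boundary

variable {a b d u : ℝ}

theorem copulaLowerBoundAt_zero_right (hdb : d ≤ b) (hu : u ≤ 1) :
    copulaLowerBoundAt a b d u 0 = 0 := by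
  have hW : max (u + 0 - 1) 0 = 0 := max_eq_right (by linarith)
  rw [copulaLowerBoundAt, hW]
  exact max_eq_left (by linarith [posPart_nonneg (a - u), le_posPart (b - 0)])

theorem copulaLowerBoundAt_one_right (hda : d ≤ a) (hu : 0 ≤ u) :
    copulaLowerBoundAt a b d u 1 = u := by
  have hW : max (u + 1 - 1) 0 = u := by rw [add_sub_cancel_right, max_eq_left hu]
  rw [copulaLowerBoundAt, hW]
  exact max_eq_left (by linarith [le_posPart (a - u), posPart_nonneg (b - 1)])

end Boundary

section Volume

variable (a b d : ℝ)

theorem isTwoIncreasingOn_copulaLowerBoundAt_Iic_univ :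
    IsTwoIncreasingOn (copulaLowerBoundAt a b d) (Iic a) univ := by
  have hg : Monotone fun v ↦ max (v - 1) (d - a - (b - v)⁺) := fun v₁ v₂ hv ↦ by
    have hpos : (b - v₂)⁺ ≤ (b - v₁)⁺ := posPart_mono (by gcongr)
    dsimp only
    gcongr
  refine (isTwoIncreasingOn_max_add 0 (monotone_id.monotoneOn _) (hg.monotoneOn _)).congr
    fun u (hu : u ≤ a) v _ ↦ ?_
  rw [copulaLowerBoundAt, posPart_of_nonneg (sub_nonneg.2 hu), max_comm _ (0 : ℝ), max_assoc,
    id, ← max_add_add_left]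
  ring_nf

theorem isTwoIncreasingOn_copulaLowerBoundAt_Ici_Ici :
    IsTwoIncreasingOn (copulaLowerBoundAt a b d) (Ici a) (Ici b) := by
  have hg : Monotone fun v : ℝ ↦ v - 1 := fun _ _ hv ↦ by dsimp only; gcongr
  refine (isTwoIncreasingOn_max_add (max 0 d) (monotone_id.monotoneOn _) (hg.monotoneOn _)).congr
    fun u (hu : a ≤ u) v (hv : b ≤ v) ↦ ?_
  rw [copulaLowerBoundAt, posPart_of_nonpos (sub_nonpos.2 hu), posPart_of_nonpos (sub_nonpos.2 hv),
    sub_zero, sub_zero, id, ← add_sub_assoc, max_comm (u + v - 1), max_right_comm]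

theorem isTwoIncreasingOn_copulaLowerBoundAt :
    IsTwoIncreasingOn (copulaLowerBoundAt a b d) univ univ := by
  have hlower : IsTwoIncreasingOn (copulaLowerBoundAt a b d) univ (Iic b) :=
    (isTwoIncreasingOn_copulaLowerBoundAt_Iic_univ b a d).swap.congr
      fun u _ v _ ↦ copulaLowerBoundAt_swap a b d u v
  have hright : IsTwoIncreasingOn (copulaLowerBoundAt a b d) (Ici a) univ :=
    (hlower.mono (subset_univ _) Subset.rfl).univ_right
      (isTwoIncreasingOn_copulaLowerBoundAt_Ici_Ici a b d)
  exact (isTwoIncreasingOn_copulaLowerBoundAt_Iic_univ a b d).univ_left hright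

end Volume

theorem isCopula_copulaLowerBoundAt {a b d : ℝ} (hda : d ≤ a) (hdb : d ≤ b) :
    IsCopula (copulaLowerBoundAt a b d) := by
  refine ⟨fun u ⟨hu0, hu1⟩ ↦ ⟨copulaLowerBoundAt_zero_right hdb hu1, ?_,
    copulaLowerBoundAt_one_right hda hu0, ?_⟩, fun u₁ u₂ v₁ v₂ _ hu _ _ hv _ ↦ ?_⟩
  · rw [← copulaLowerBoundAt_swap, copulaLowerBoundAt_zero_right hda hu1]
  · rw [← copulaLowerBoundAt_swap, copulaLowerBoundAt_one_right hdb hu0]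
  · have hrect : copulaLowerBoundAt a b d u₂ v₁ - copulaLowerBoundAt a b d u₁ v₁ ≤
        copulaLowerBoundAt a b d u₂ v₂ - copulaLowerBoundAt a b d u₁ v₂ :=
      isTwoIncreasingOn_copulaLowerBoundAt a b d (mem_univ u₁) (mem_univ u₂) hu
        (mem_univ v₁) (mem_univ v₂) hv
    linarith

theorem sub_posPart_sub_eq_min (d x y : ℝ) : d - (x - y)⁺ = min d (y - x + d) := by
  have hxy : y - x + d = d - (x - y) := by ring
  rw [hxy, posPart_def, ← min_sub_sub_left, sub_zero, min_comm]

theorem lowerC_eq_copulaLowerBoundAt (a b c : ℝ) :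
    lowerC a b c = copulaLowerBoundAt a b (max (a + b - 1) 0 + c) := by
  funext u v
  rw [lowerC, copulaLowerBoundAt, sub_posPart_sub_eq_min, sub_posPart_sub_eq_min,
    ← min_add_add_left]
  ring_nf

theorem lowerC_isCopula (a b c : ℝ) (ha : a ∈ Set.Icc (0:ℝ) 1) (hb : b ∈ Set.Icc (0:ℝ) 1)
    (hc0 : 0 ≤ c) (hc : c ≤ min (min a b) (min (1 - a) (1 - b))) :
    IsCopula (lowerC a b c) := by
  simp only [le_min_iff] at hc
  obtain ⟨⟨hca, hcb⟩, hca', hcb'⟩ := hc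
  have hda : max (a + b - 1) 0 + c ≤ a := by
    rw [← le_sub_iff_add_le]
    exact max_le (by linarith) (by linarith)
  have hdb : max (a + b - 1) 0 + c ≤ b := by
    rw [← le_sub_iff_add_le]
    exact max_le (by linarith) (by linarith)
  rw [lowerC_eq_copulaLowerBoundAt]
  exact isCopula_copulaLowerBoundAt hda hdb
end

section
/- Let (a,b) ∈ [0,1]² and let c satisfy 0 ≤ c ≤ min{a,b,1−a,1−b}. Then the function C̄^{(a,b)}_c is a copula, i.e. it satisfies C̄^{(a,b)}_c(u,0) = C̄^{(a,b)}_c(0,v) = 0, C̄^{(a,b)}_c(u,1) = u and C̄^{(a,b)}_c(1,v) = v for all u,v ∈ [0,1], and it is 2-increasing. -/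
open Set MeasureTheory intervalIntegral

/-! With `d = min a b - c`, the function `upperC a b c` is `min {u, v, f u + g v}` for
`f u = d + (u - b)⁺` and `g v = (v - a)⁺`. Both `f` and `g` are monotone and 1-Lipschitz (that is,
`u - f u` and `v - g v` are monotone too), which already makes such a minimum 2-increasing; the
boundary conditions reduce to `0 ≤ f 0 + g 0` and `1 ≤ f 1 + g 1`. -/

theorem min_min_add_rectangle_le {G : Type*} [AddCommGroup G] [LinearOrder G]
    [IsOrderedAddMonoid G] {x₁ x₂ y₁ y₂ p₁ p₂ q₁ q₂ : G}
    (hp : p₁ ≤ p₂) (hxp : x₁ - p₁ ≤ x₂ - p₂) (hq : q₁ ≤ q₂) (hyq : y₁ - q₁ ≤ y₂ - q₂) :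
    min (min x₂ y₁) (p₂ + q₁) + min (min x₁ y₂) (p₁ + q₂)
      ≤ min (min x₂ y₂) (p₂ + q₂) + min (min x₁ y₁) (p₁ + q₁) := by
  have hx : x₁ ≤ x₂ := by simpa using add_le_add hxp hp
  have hy : y₁ ≤ y₂ := by simpa using add_le_add hyq hq
  suffices ∀ m m', m ≤ min (min x₂ y₁) (p₂ + q₁) → m' ≤ min (min x₁ y₂) (p₁ + q₂) →
      m + m' ≤ min (min x₂ y₂) (p₂ + q₂) + min (min x₁ y₁) (p₁ + q₁) from
    this _ _ le_rfl le_rfl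
  simp only [min_add, add_min, le_min_iff]
  rintro m m' ⟨⟨hmx, hmy⟩, hm⟩ ⟨⟨hmx', hmy'⟩, hm'⟩
  have hm₂₂ : m ≤ p₂ + q₂ := hm.trans (by gcongr)
  have hm₂₂' : m' ≤ p₂ + q₂ := hm'.trans (by gcongr)
  -- One inequality for each choice of terms attaining the two minima on the right.
  refine ⟨⟨⟨⟨?_, ?_⟩, ?_⟩, ⟨⟨?_, ?_⟩, ?_⟩⟩, ⟨⟨?_, ?_⟩, ?_⟩⟩
  · exact add_le_add hmx hmx'
  · exact add_le_add (hmy.trans hy) hmx'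
  · exact add_le_add hm₂₂ hmx'
  · exact add_comm m m' ▸ add_le_add (hmx'.trans hx) hmy
  · exact add_comm m m' ▸ add_le_add hmy' hmy
  · exact add_comm m m' ▸ add_le_add hm₂₂' hmy
  · calc m + m' ≤ p₂ + q₁ + x₁ := add_le_add hm hmx'
      _ = x₁ - p₁ + (p₂ + (p₁ + q₁)) := by abel
      _ ≤ x₂ - p₂ + (p₂ + (p₁ + q₁)) := by gcongr
      _ = x₂ + (p₁ + q₁) := by abel
  · calc m + m' ≤ y₁ + (p₁ + q₂) := add_le_add hmy hm'
      _ = y₁ - q₁ + (q₂ + (p₁ + q₁)) := by abel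
      _ ≤ y₂ - q₂ + (q₂ + (p₁ + q₁)) := by gcongr
      _ = y₂ + (p₁ + q₁) := by abel
  · calc m + m' ≤ p₂ + q₁ + (p₁ + q₂) := add_le_add hm hm'
      _ = p₂ + q₂ + (p₁ + q₁) := by abel

theorem isCopula_min_min_add {f g : ℝ → ℝ}
    (hf : MonotoneOn f (Icc 0 1)) (hf' : MonotoneOn (fun u => u - f u) (Icc 0 1))
    (hg : MonotoneOn g (Icc 0 1)) (hg' : MonotoneOn (fun v => v - g v) (Icc 0 1))
    (h₀ : 0 ≤ f 0 + g 0) (h₁ : 1 ≤ f 1 + g 1) :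
    IsCopula fun u v => min (min u v) (f u + g v) := by
  have zero_mem : (0 : ℝ) ∈ Icc (0 : ℝ) 1 := left_mem_Icc.2 zero_le_one
  have one_mem : (1 : ℝ) ∈ Icc (0 : ℝ) 1 := right_mem_Icc.2 zero_le_one
  refine ⟨fun u hu => ?boundary, fun u₁ u₂ v₁ v₂ hu₁ hu hu₂ hv₁ hv hv₂ => ?rectangle⟩
  case boundary =>
    have hf₀ : f 0 ≤ f u := hf zero_mem hu hu.1
    have hg₀ : g 0 ≤ g u := hg zero_mem hu hu.1
    have hf₁ : u - f u ≤ 1 - f 1 := hf' hu one_mem hu.2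
    have hg₁ : u - g u ≤ 1 - g 1 := hg' hu one_mem hu.2
    dsimp only
    rw [min_eq_right hu.1, min_eq_left hu.1, min_eq_left hu.2, min_eq_right hu.2]
    refine ⟨min_eq_left ?_, min_eq_left ?_, min_eq_left ?_, min_eq_left ?_⟩ <;> linarith
  case rectangle =>
    have hu₁' : u₁ ∈ Icc (0 : ℝ) 1 := ⟨hu₁, hu.trans hu₂⟩
    have hu₂' : u₂ ∈ Icc (0 : ℝ) 1 := ⟨hu₁.trans hu, hu₂⟩
    have hv₁' : v₁ ∈ Icc (0 : ℝ) 1 := ⟨hv₁, hv.trans hv₂⟩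
    have hv₂' : v₂ ∈ Icc (0 : ℝ) 1 := ⟨hv₁.trans hv, hv₂⟩
    linarith [min_min_add_rectangle_le (hf hu₁' hu₂' hu) (hf' hu₁' hu₂' hu)
      (hg hv₁' hv₂' hv) (hg' hv₁' hv₂' hv)]

theorem monotone_posPart_sub {G : Type*} [AddCommGroup G] [Lattice G] [AddLeftMono G] (s : G) :
    Monotone fun x : G => (x - s)⁺ :=
  fun _ _ h => posPart_mono (sub_le_sub_right h s)

theorem monotone_sub_posPart_sub {G : Type*} [AddCommGroup G] [Lattice G] [AddLeftMono G] (s : G) :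
    Monotone fun x : G => x - (x - s)⁺ := by
  simp only [← inf_eq_sub_posPart_sub]
  exact monotone_id.inf monotone_const

theorem upperC_eq_min_min_add (a b c : ℝ) :
    upperC a b c = fun u v => min (min u v) ((min a b - c + (u - b)⁺) + (v - a)⁺) := by
  funext u v
  have max_eq (d x y : ℝ) : max (max d (x + d)) (max (y + d) (x + y + d)) = d + x⁺ + y⁺ := by
    grind [posPart_def]
  rw [← max_eq, upperC, show u - b + (v - a) = u + v - a - b by ring]

theorem upperC_isCopula_general (a b c : ℝ)
    (hc : c ≤ min (min a b) (min (1 - a) (1 - b))) : IsCopula (upperC a b c) := by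
  obtain ⟨hcab, hcab'⟩ := le_min_iff.1 hc
  obtain ⟨hca, hcb⟩ := le_min_iff.1 hcab'
  have hd : a + b - (min a b - c) ≤ 1 := by
    rcases min_choice a b with h | h <;> rw [h] <;> linarith
  rw [upperC_eq_min_min_add]
  refine isCopula_min_min_add
    (((monotone_posPart_sub b).const_add _).monotoneOn _) (Monotone.monotoneOn ?_ _)
    ((monotone_posPart_sub a).monotoneOn _) ((monotone_sub_posPart_sub a).monotoneOn _) ?_ ?_
  · exact fun x y hxy => by linarith [monotone_sub_posPart_sub b hxy]
  · linarith [posPart_nonneg (0 - b), posPart_nonneg (0 - a)]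
  · linarith [le_posPart (1 - b), le_posPart (1 - a)]

theorem upperC_isCopula (a b c : ℝ) (ha : a ∈ Set.Icc (0:ℝ) 1) (hb : b ∈ Set.Icc (0:ℝ) 1)
    (hc0 : 0 ≤ c) (hc : c ≤ min (min a b) (min (1 - a) (1 - b))) :
    IsCopula (upperC a b c) :=
  upperC_isCopula_general a b c hc
end

section
/- Let (a,b) ∈ [0,1]² and let c satisfy 0 ≤ c ≤ min{a,b,1−a,1−b,|b−a|}. Then: (i) C̲^{(a,b)}_c(a,b) − C̲^{(a,b)}_c(b,a) = c and C̄^{(a,b)}_c(a,b) − C̄^{(a,b)}_c(b,a) = c; (ii) for every copula C with C(a,b) − C(b,a) = c, one has C̲^{(a,b)}_c(u,v) ≤ C(u,v) ≤ C̄^{(a,b)}_c(u,v) for all (u,v) ∈ [0,1]². -/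
open Set MeasureTheory intervalIntegral

/-!
A copula satisfies the one-sided `ℓ¹`-Lipschitz inequality
`C u' v' - C u v ≤ (u' - u)⁺ + (v' - v)⁺`. If `c ≤ C a b - C b a`, the lower Fréchet–Hoeffding
bound at `(b, a)` gives `C a b ≥ max (a + b - 1) 0 + c`, which the Lipschitz inequality propagates
to every `(u, v)`; dually, the upper bound at `(a, b)` gives `C b a ≤ min a b - c`. Accordingly
`lowerC` is the larger of the lower Fréchet–Hoeffding bound and a cone with apex at `(a, b)`, and
`upperC` the smaller of the upper one and a cone with apex at `(b, a)`. Between the two points each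
cone varies by exactly `|b - a|`, so the asymmetry of either bound at `(a, b)` is `c` clamped to
`[0, |b - a|]`.
-/

theorem posPart_sub_add_posPart_sub_swap {α : Type*} [Lattice α] [AddCommGroup α]
    [IsOrderedAddMonoid α] (x y : α) : (x - y)⁺ + (y - x)⁺ = |y - x| := by
  rw [← posPart_add_negPart (y - x), add_comm, ← posPart_neg, neg_sub]

section LinearOrderedAddCommGroup

variable {α : Type*} [AddCommGroup α] [LinearOrder α] [IsOrderedAddMonoid α]

theorem max_self_add_eq_add_posPart (x y : α) : max x (x + y) = x + y⁺ := by
  rw [posPart_def, max_comm, ← max_add_add_left, add_zero]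

theorem min_self_sub_eq_sub_posPart (x y : α) : min x (x - y) = x - y⁺ := by
  rw [posPart_def, max_comm, ← min_sub_sub_left, sub_zero]

theorem posPart_sub_posPart_sub_eq_min (x : α) {r : α} (hr : 0 ≤ r) : x⁺ - (x - r)⁺ = min x⁺ r := by
  simp only [posPart_def]
  grind

end LinearOrderedAddCommGroup

section Cones

variable (a b c : ℝ)

theorem lowerC_apply (u v : ℝ) : lowerC a b c u v =
    max (max (u + v - 1) 0) (max (a + b - 1) 0 + c - ((a - u)⁺ + (b - v)⁺)) := by
  have h_cone (d : ℝ) : min (min d (u - a + d)) (min (v - b + d) (u + v - a - b + d)) =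
      d - ((a - u)⁺ + (b - v)⁺) := by
    simp only [posPart_def]
    grind
  rw [lowerC, h_cone]

theorem upperC_apply (u v : ℝ) : upperC a b c u v =
    min (min u v) (min a b - c + ((u - b)⁺ + (v - a)⁺)) := by
  have h_cone (d : ℝ) : max (max d (u - b + d)) (max (v - a + d) (u + v - a - b + d)) =
      d + ((u - b)⁺ + (v - a)⁺) := by
    simp only [posPart_def]
    grind
  rw [upperC, h_cone]

theorem lowerC_sub_lowerC_swap : lowerC a b c a b - lowerC a b c b a = min c⁺ |b - a| := by
  have h_apex : lowerC a b c a b = max (a + b - 1) 0 + c⁺ := by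
    rw [lowerC_apply, sub_self, sub_self, posPart_zero, add_zero, sub_zero,
      max_self_add_eq_add_posPart]
  have h_swap : lowerC a b c b a = max (a + b - 1) 0 + (c - |b - a|)⁺ := by
    rw [lowerC_apply, posPart_sub_add_posPart_sub_swap, add_comm b a, add_sub_assoc _ c,
      max_self_add_eq_add_posPart]
  rw [h_apex, h_swap, add_sub_add_left_eq_sub, posPart_sub_posPart_sub_eq_min _ (abs_nonneg _)]

theorem upperC_sub_upperC_swap : upperC a b c a b - upperC a b c b a = min c⁺ |b - a| := by
  have h_swap : upperC a b c a b = min a b - (c - |b - a|)⁺ := by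
    rw [upperC_apply, posPart_sub_add_posPart_sub_swap, sub_add, min_self_sub_eq_sub_posPart]
  have h_apex : upperC a b c b a = min a b - c⁺ := by
    rw [upperC_apply, sub_self, sub_self, posPart_zero, add_zero, add_zero, min_comm b a,
      min_self_sub_eq_sub_posPart]
  rw [h_swap, h_apex, sub_sub_sub_cancel_left, posPart_sub_posPart_sub_eq_min _ (abs_nonneg _)]

end Cones

namespace IsCopula

variable {C : ℝ → ℝ → ℝ} {a b c u u' v v' : ℝ}

theorem apply_zero_left (hC : IsCopula C) (hv : v ∈ Icc (0 : ℝ) 1) : C 0 v = 0 :=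
  (hC.1 v hv).2.1

theorem apply_zero_right (hC : IsCopula C) (hu : u ∈ Icc (0 : ℝ) 1) : C u 0 = 0 :=
  (hC.1 u hu).1

theorem apply_one_left (hC : IsCopula C) (hv : v ∈ Icc (0 : ℝ) 1) : C 1 v = v :=
  (hC.1 v hv).2.2.2

theorem apply_one_right (hC : IsCopula C) (hu : u ∈ Icc (0 : ℝ) 1) : C u 1 = u :=
  (hC.1 u hu).2.2.1

theorem swap (hC : IsCopula C) : IsCopula (Function.swap C) := by
  refine ⟨fun u hu => ⟨hC.apply_zero_left hu, hC.apply_zero_right hu, hC.apply_one_left hu,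
    hC.apply_one_right hu⟩, fun u₁ u₂ v₁ v₂ hu₁ hu hu₂ hv₁ hv hv₂ => ?_⟩
  have hvol := hC.2 v₁ v₂ u₁ u₂ hv₁ hv hv₂ hu₁ hu hu₂
  simp only [Function.swap]
  linarith

theorem monotoneOn_left (hC : IsCopula C) (hv : v ∈ Icc (0 : ℝ) 1) :
    MonotoneOn (fun u => C u v) (Icc 0 1) := by
  intro u hu u' hu' huu'
  have hvol := hC.2 u u' 0 v hu.1 huu' hu'.2 le_rfl hv.1 hv.2
  rw [hC.apply_zero_right hu, hC.apply_zero_right hu'] at hvol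
  dsimp only
  linarith

theorem sub_le_posPart_left (hC : IsCopula C) (hu : u ∈ Icc (0 : ℝ) 1)
    (hu' : u' ∈ Icc (0 : ℝ) 1) (hv : v ∈ Icc (0 : ℝ) 1) :
    C u' v - C u v ≤ (u' - u)⁺ := by
  rcases le_total u u' with huu' | hu'u
  · have hvol := hC.2 u u' v 1 hu.1 huu' hu'.2 hv.1 hv.2 le_rfl
    rw [hC.apply_one_right hu, hC.apply_one_right hu'] at hvol
    exact le_trans (by linarith) (le_posPart (u' - u))
  · exact (sub_nonpos.2 (hC.monotoneOn_left hv hu' hu hu'u)).trans (posPart_nonneg _)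

theorem sub_le_posPart_right (hC : IsCopula C) (hu : u ∈ Icc (0 : ℝ) 1)
    (hv : v ∈ Icc (0 : ℝ) 1) (hv' : v' ∈ Icc (0 : ℝ) 1) :
    C u v' - C u v ≤ (v' - v)⁺ :=
  hC.swap.sub_le_posPart_left hv hv' hu

theorem sub_le_posPart_add_posPart (hC : IsCopula C) (hu : u ∈ Icc (0 : ℝ) 1)
    (hv : v ∈ Icc (0 : ℝ) 1) (hu' : u' ∈ Icc (0 : ℝ) 1) (hv' : v' ∈ Icc (0 : ℝ) 1) :
    C u' v' - C u v ≤ (u' - u)⁺ + (v' - v)⁺ := by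
  linarith [hC.sub_le_posPart_left hu hu' hv', hC.sub_le_posPart_right hu hv hv']

theorem max_add_sub_one_zero_le (hC : IsCopula C) (hu : u ∈ Icc (0 : ℝ) 1)
    (hv : v ∈ Icc (0 : ℝ) 1) : max (u + v - 1) 0 ≤ C u v := by
  refine max_le ?_ ?_
  · have h := hC.sub_le_posPart_add_posPart hu hv unitInterval.one_mem unitInterval.one_mem
    rw [hC.apply_one_left unitInterval.one_mem, posPart_of_nonneg (sub_nonneg.2 hu.2),
      posPart_of_nonneg (sub_nonneg.2 hv.2)] at h
    linarith
  · calc 0 = C 0 v := (hC.apply_zero_left hv).symm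
      _ ≤ C u v := hC.monotoneOn_left hv unitInterval.zero_mem hu hu.1

theorem apply_le_left (hC : IsCopula C) (hu : u ∈ Icc (0 : ℝ) 1)
    (hv : v ∈ Icc (0 : ℝ) 1) : C u v ≤ u := by
  simpa only [hC.apply_zero_left hv, sub_zero, posPart_of_nonneg hu.1] using
    hC.sub_le_posPart_left unitInterval.zero_mem hu hv

theorem apply_le_min (hC : IsCopula C) (hu : u ∈ Icc (0 : ℝ) 1)
    (hv : v ∈ Icc (0 : ℝ) 1) : C u v ≤ min u v :=
  le_min (hC.apply_le_left hu hv) (hC.swap.apply_le_left hv hu)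

theorem lowerC_le (hC : IsCopula C) (ha : a ∈ Icc (0 : ℝ) 1) (hb : b ∈ Icc (0 : ℝ) 1)
    (hc : c ≤ C a b - C b a) (hu : u ∈ Icc (0 : ℝ) 1) (hv : v ∈ Icc (0 : ℝ) 1) :
    lowerC a b c u v ≤ C u v := by
  have h_apex : max (a + b - 1) 0 + c ≤ C a b := by
    linarith [add_comm a b ▸ hC.max_add_sub_one_zero_le hb ha]
  rw [lowerC_apply]
  refine max_le (hC.max_add_sub_one_zero_le hu hv) ?_
  linarith [hC.sub_le_posPart_add_posPart hu hv ha hb]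

theorem le_upperC (hC : IsCopula C) (ha : a ∈ Icc (0 : ℝ) 1) (hb : b ∈ Icc (0 : ℝ) 1)
    (hc : c ≤ C a b - C b a) (hu : u ∈ Icc (0 : ℝ) 1) (hv : v ∈ Icc (0 : ℝ) 1) :
    C u v ≤ upperC a b c u v := by
  have h_apex : C b a ≤ min a b - c := by linarith [hC.apply_le_min ha hb]
  rw [upperC_apply]
  refine le_min (hC.apply_le_min hu hv) ?_
  linarith [hC.sub_le_posPart_add_posPart hb ha hu hv]

end IsCopula

theorem local_frechet_hoeffding_bounds_general (a b c : ℝ) (ha : a ∈ Icc (0 : ℝ) 1)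
    (hb : b ∈ Icc (0 : ℝ) 1) :
    (lowerC a b c a b - lowerC a b c b a = min c⁺ |b - a| ∧
      upperC a b c a b - upperC a b c b a = min c⁺ |b - a|) ∧
    ∀ C : ℝ → ℝ → ℝ, IsCopula C → c ≤ C a b - C b a →
      ∀ u ∈ Icc (0 : ℝ) 1, ∀ v ∈ Icc (0 : ℝ) 1,
        lowerC a b c u v ≤ C u v ∧ C u v ≤ upperC a b c u v :=
  ⟨⟨lowerC_sub_lowerC_swap a b c, upperC_sub_upperC_swap a b c⟩, fun _ hC hc _ hu _ hv =>
    ⟨hC.lowerC_le ha hb hc hu hv, hC.le_upperC ha hb hc hu hv⟩⟩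

theorem local_frechet_hoeffding_bounds (a b c : ℝ) (ha : a ∈ Set.Icc (0:ℝ) 1)
    (hb : b ∈ Set.Icc (0:ℝ) 1) (hc0 : 0 ≤ c)
    (hc : c ≤ min (min (min a b) (min (1 - a) (1 - b))) |b - a|) :
    (lowerC a b c a b - lowerC a b c b a = c ∧
     upperC a b c a b - upperC a b c b a = c) ∧
    ∀ C : ℝ → ℝ → ℝ, IsCopula C → C a b - C b a = c →
      ∀ u ∈ Set.Icc (0:ℝ) 1, ∀ v ∈ Set.Icc (0:ℝ) 1,
        lowerC a b c u v ≤ C u v ∧ C u v ≤ upperC a b c u v := by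
  obtain ⟨h_asymm, h_bounds⟩ := local_frechet_hoeffding_bounds_general a b c ha hb
  rw [posPart_of_nonneg hc0, min_eq_left (hc.trans (min_le_right _ _))] at h_asymm
  exact ⟨h_asymm, fun C hC h_eq => h_bounds C hC h_eq.ge⟩
end

section
/- Let (a,b) ∈ [0,1]² and let c satisfy 0 ≤ c ≤ min{a,b,1−a,1−b}, and set d₁ = max{a+b−1,0} + c. Then 4∫₀¹ C̲^{(a,b)}_c(u,1−u) du − 1 = 4d₁(1−a−b+d₁) − 1. -/
open Set MeasureTheory intervalIntegral

/-! Along the antidiagonal `v = 1 - u` the lower bound is a trapezoid with slopes `1`, `0`, `-1`: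
writing `e = 1 - a - b + d₁`, its height is `min d₁ e` and its parallel sides are `d₁ + e` and
`|d₁ - e|`, so its area is `d₁ * e`. The admissible range of `c` makes `d₁` and `e` nonnegative and
keeps the trapezoid inside `[0, 1]`. To compute the area without ordering `d₁` and `e`, write the
trapezoid as a ramp cut off at height `d₁` minus its translate by `e`, hence as a signed sum of four
ramps `x ↦ max (x - t) 0`, one for each corner. -/

theorem hasDerivAt_max_zero_pow_succ {n : ℕ} (hn : n ≠ 0) (x : ℝ) :
    HasDerivAt (fun y : ℝ => max y 0 ^ (n + 1)) ((n + 1) * max x 0 ^ n) x := by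
  refine hasDerivAt_of_hasDerivAt_of_ne' (x := 0)
    (g := fun y : ℝ => ((n : ℝ) + 1) * max y 0 ^ n) (fun y hy => ?_)
    (by fun_prop) (by fun_prop) x
  rcases hy.lt_or_gt with hneg | hpos
  · have hzero : (fun z : ℝ => max z 0 ^ (n + 1)) =ᶠ[nhds y] fun _ => 0 := by
      filter_upwards [Iio_mem_nhds hneg] with z hz
      rw [max_eq_right (mem_Iio.mp hz).le, zero_pow n.succ_ne_zero]
    simpa only [max_eq_right hneg.le, zero_pow hn, mul_zero] using
      (hasDerivAt_const y (0 : ℝ)).congr_of_eventuallyEq hzero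
  · have hpow : (fun z : ℝ => max z 0 ^ (n + 1)) =ᶠ[nhds y] fun z => z ^ (n + 1) := by
      filter_upwards [Ioi_mem_nhds hpos] with z hz
      rw [max_eq_left (mem_Ioi.mp hz).le]
    simpa only [max_eq_left hpos.le, Nat.cast_add, Nat.cast_one, Nat.add_sub_cancel] using
      (hasDerivAt_pow (n + 1) y).congr_of_eventuallyEq hpow

theorem integral_max_zero_pow {n : ℕ} (hn : n ≠ 0) (l r : ℝ) :
    ∫ x in l..r, max x 0 ^ n = (max r 0 ^ (n + 1) - max l 0 ^ (n + 1)) / (n + 1) := by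
  have hcont : Continuous fun x : ℝ => ((n : ℝ) + 1) * max x 0 ^ n := by fun_prop
  rw [eq_div_iff n.cast_add_one_ne_zero, mul_comm, ← intervalIntegral.integral_const_mul]
  exact integral_eq_sub_of_hasDerivAt (fun x _ => hasDerivAt_max_zero_pow_succ hn x)
    (hcont.intervalIntegrable l r)

theorem integral_max_sub_zero {l t r : ℝ} (hl : l ≤ t) (hr : t ≤ r) :
    ∫ x in l..r, max (x - t) 0 = (r - t) ^ 2 / 2 := by
  have hpow := integral_max_zero_pow one_ne_zero (l - t) (r - t)
  rw [max_eq_left (sub_nonneg.mpr hr), max_eq_right (sub_nonpos.mpr hl)] at hpow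
  rw [intervalIntegral.integral_comp_sub_right fun x => max x 0]
  simpa only [pow_one, one_add_one_eq_two, Nat.cast_one, zero_pow two_ne_zero, sub_zero] using hpow

/-- The trapezoid function with corners at `p`, `p + min d e`, `p + max d e` and `p + d + e` and
slopes `1`, `0`, `-1` between them. It is symmetric in `d` and `e`, so that these need not be
ordered; for negative `d` or `e` it is identically zero. -/
noncomputable def trapezoid (p d e x : ℝ) : ℝ :=
  max 0 (min (min d (x - p)) (min (p + d + e - x) e))

theorem max_zero_min_eq_sub {α : Type*} [AddCommGroup α] [LinearOrder α] [IsOrderedAddMonoid α]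
    {d : α} (hd : 0 ≤ d) (x : α) : max 0 (min d x) = max x 0 - max (x - d) 0 := by
  rcases le_total x d with hx | hx
  · rw [min_eq_right hx, max_eq_right (sub_nonpos.mpr hx), sub_zero, max_comm]
  · rw [min_eq_left hx, max_eq_right hd, max_eq_left (hd.trans hx),
      max_eq_left (sub_nonneg.mpr hx), sub_sub_cancel]

theorem trapezoid_eq_ramps {d e : ℝ} (hd : 0 ≤ d) (he : 0 ≤ e) (p x : ℝ) :
    trapezoid p d e x =
      max (x - p) 0 - max (x - (p + d)) 0 - max (x - (p + e)) 0 + max (x - (p + d + e)) 0 := by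
  calc
    trapezoid p d e x = max 0 (min d (x - p)) - max 0 (min d (x - p - e)) := by
      unfold trapezoid
      grind
    _ = (max (x - p) 0 - max (x - p - d) 0) - (max (x - p - e) 0 - max (x - p - e - d) 0) := by
      rw [max_zero_min_eq_sub hd, max_zero_min_eq_sub hd]
    _ = _ := by ring_nf

theorem integral_trapezoid {p d e l r : ℝ} (hd : 0 ≤ d) (he : 0 ≤ e) (hl : l ≤ p)
    (hr : p + d + e ≤ r) : ∫ x in l..r, trapezoid p d e x = d * e := by
  have hramp (t : ℝ) : IntervalIntegrable (fun x : ℝ => max (x - t) 0) volume l r :=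
    Continuous.intervalIntegrable (by fun_prop) l r
  simp only [trapezoid_eq_ramps hd he]
  calc
    _ = (r - p) ^ 2 / 2 - (r - (p + d)) ^ 2 / 2 - (r - (p + e)) ^ 2 / 2
          + (r - (p + d + e)) ^ 2 / 2 := by
      rw [intervalIntegral.integral_add (((hramp _).sub (hramp _)).sub (hramp _)) (hramp _),
        intervalIntegral.integral_sub ((hramp _).sub (hramp _)) (hramp _),
        intervalIntegral.integral_sub (hramp _) (hramp _),
        integral_max_sub_zero, integral_max_sub_zero, integral_max_sub_zero,
        integral_max_sub_zero] <;> linarith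
    _ = d * e := by ring

theorem lowerC_antidiagonal {a b c d : ℝ} (hd : d = max (a + b - 1) 0 + c) (u : ℝ) :
    lowerC a b c u (1 - u) = trapezoid (a - d) d (1 - a - b + d) u := by
  simp only [lowerC, trapezoid, ← hd]
  congr 1
  · rw [add_sub_cancel, sub_self, max_self]
  · congr 2 <;> ring

theorem Q_W_lowerC (a b c d₁ : ℝ) (ha : a ∈ Set.Icc (0:ℝ) 1) (hb : b ∈ Set.Icc (0:ℝ) 1)
    (hc0 : 0 ≤ c) (hc : c ≤ min (min a b) (min (1 - a) (1 - b)))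
    (hd : d₁ = max (a + b - 1) 0 + c) :
    4 * (∫ u in (0:ℝ)..1, lowerC a b c u (1 - u)) - 1 = 4 * d₁ * (1 - a - b + d₁) - 1 := by
  obtain ⟨⟨hca, hcb⟩, hca', hcb'⟩ : (c ≤ a ∧ c ≤ b) ∧ c ≤ 1 - a ∧ c ≤ 1 - b := by
    simpa only [le_min_iff] using hc
  have hd₁ : 0 ≤ d₁ := by linarith [le_max_right (a + b - 1) 0]
  have he : 0 ≤ 1 - a - b + d₁ := by linarith [le_max_left (a + b - 1) 0]
  have hd₁a : d₁ ≤ a := by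
    rw [hd, ← le_sub_iff_add_le]
    exact max_le (by linarith) (by linarith)
  have hd₁b : d₁ ≤ b := by
    rw [hd, ← le_sub_iff_add_le]
    exact max_le (by linarith) (by linarith)
  have harea : ∫ u in (0:ℝ)..1, lowerC a b c u (1 - u) = d₁ * (1 - a - b + d₁) := by
    simp only [lowerC_antidiagonal hd]
    exact integral_trapezoid hd₁ he (by linarith) (by linarith)
  rw [harea, mul_assoc]
end

section
/- Let (a,b) ∈ [0,1]² and let c satisfy 0 ≤ c ≤ min{a,b,1−a,1−b}, and set d₁ = max{a+b−1,0} + c and Q = 4∫₀¹ C̲^{(a,b)}_c(u,u) du − 1. Then: Q = 0 if b ≥ d₁ + 1/2; Q = (2d₁+1−2b)² if (1+d₁)/2 ≤ b ≤ d₁ + 1/2 and a ≤ b−d₁; Q = (a+b−1−d₁)(3b−3d₁−a−1) if (1+d₁)/2 ≤ b ≤ d₁ + 1/2 and a ≥ b−d₁; Q = d₁(2+3d₁−4b) if b ≤ (1+d₁)/2 and a ≤ b−d₁; Q = 2d₁(1+d₁−a−b)−(a−b)² if d₁ ≥ 2a−1, d₁ ≥ 2b−1, d₁ ≥ a−b and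 d₁ ≥ b−a; Q = d₁(2+3d₁−4a) if a ≤ (1+d₁)/2 and b ≤ a−d₁; Q = (a+b−1−d₁)(3a−3d₁−b−1) if (1+d₁)/2 ≤ a ≤ d₁ + 1/2 and b ≥ a−d₁; Q = (2d₁+1−2a)² if (1+d₁)/2 ≤ a ≤ d₁ + 1/2 and b ≤ a−d₁; Q = 0 if a ≥ d₁ + 1/2. -/
open Set MeasureTheory intervalIntegral

/-!
Write `x⁺ = max x 0` and `g u = (a - u)⁺ + (b - u)⁺ + (2 * u - 1)⁺`. On the diagonal the minimum
term of the lower bound is `d₁ - (a - u)⁺ - (b - u)⁺`, so the diagonal section is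
`(2 * u - 1)⁺ + (d₁ - g u)⁺`; as `4 ∫ (2 * u - 1)⁺ = 1`, this gives `Q = 4 ∫ (d₁ - g u)⁺`. The
function `g` decreases up to `1 / 2` and increases afterwards. Hence `Q = 0` if `d₁ ≤ g (1 / 2)`,
and otherwise `Q = 4 ∫ (d₁ - g u)` between the roots `p ≤ 1 / 2 ≤ q` of `g = d₁`. For `a ≤ b`, the
left root is `b - d₁` or `(a + b - d₁) / 2` and the right root is `1 - b + d₁` or `(1 + d₁) / 2`,
which yields four formulas; those for `b ≤ a` follow by symmetry.
-/

/-- The function `g` with `lowerC a b c u u = (2 * u - 1)⁺ + (d₁ - g u)⁺`: the smallest level `d₁`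
at which the minimum term of `lowerC` reaches the Fréchet–Hoeffding lower bound at `(u, u)`. -/
noncomputable def diagGap (a b u : ℝ) : ℝ :=
  max (a - u) 0 + max (b - u) 0 + max (2 * u - 1) 0

/-- Four times the area over `[0, 1]` between the graph of `diagGap a b` and the level `d` above it.
For `d = d₁` this is the concordance of `lowerC a b c` with `M`. -/
noncomputable def diagExcess (a b d : ℝ) : ℝ :=
  4 * ∫ u in (0 : ℝ)..1, max (d - diagGap a b u) 0

theorem integral_zero_max_zero (x : ℝ) : ∫ u in (0 : ℝ)..x, max u 0 = max x 0 ^ 2 / 2 := by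
  rcases le_total 0 x with hx | hx
  · rw [max_eq_left hx, integral_congr (g := fun u => u), integral_id]
    · ring
    · rw [uIcc_of_le hx]
      exact fun u hu => max_eq_left hu.1
  · rw [max_eq_right hx, integral_congr (g := fun _ => 0), intervalIntegral.integral_zero]
    · ring
    · rw [uIcc_of_ge hx]
      exact fun u hu => max_eq_right hu.2

theorem integral_max_zero (x y : ℝ) :
    ∫ u in x..y, max u 0 = (max y 0 ^ 2 - max x 0 ^ 2) / 2 := by
  have hI (z : ℝ) : IntervalIntegrable (fun u : ℝ => max u 0) volume 0 z :=
    (by fun_prop : Continuous fun u : ℝ => max u 0).intervalIntegrable 0 z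
  rw [← integral_interval_sub_left (hI y) (hI x), integral_zero_max_zero, integral_zero_max_zero]
  ring

theorem integral_max_sub_zero_s6 (a x y : ℝ) :
    ∫ u in x..y, max (a - u) 0 = (max (a - x) 0 ^ 2 - max (a - y) 0 ^ 2) / 2 := by
  rw [integral_comp_sub_left (fun v => max v 0), integral_max_zero]

theorem integral_max_two_mul_sub_one_zero (x y : ℝ) :
    ∫ u in x..y, max (2 * u - 1) 0 = (max (2 * y - 1) 0 ^ 2 - max (2 * x - 1) 0 ^ 2) / 4 := by
  rw [integral_comp_mul_sub (fun v => max v 0) two_ne_zero, integral_max_zero, smul_eq_mul]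
  ring

theorem integral_max_sub_zero_of_antitoneOn_of_monotoneOn {g : ℝ → ℝ} {d x m y p q : ℝ}
    (hanti : AntitoneOn g (Icc x m)) (hmono : MonotoneOn g (Icc m y))
    (hp : p ∈ Icc x m) (hq : q ∈ Icc m y) (hgp : g p = d) (hgq : g q = d) :
    ∫ u in x..y, max (d - g u) 0 = ∫ u in p..q, (d - g u) := by
  have hpq : p ≤ q := hp.2.trans hq.1
  have hxy : x ≤ y := hp.1.trans (hpq.trans hq.2)
  have above : ∀ u ∈ Ioc x y \ Ioc p q, max (d - g u) 0 = 0 := by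
    rintro u ⟨hu, hu'⟩
    refine max_eq_right (sub_nonpos.2 ?_)
    rcases le_or_gt u p with hup | hpu
    · exact hgp ▸ hanti ⟨hu.1.le, hup.trans hp.2⟩ hp hup
    · have hqu : q ≤ u := le_of_not_ge fun huq => hu' ⟨hpu, huq⟩
      exact hgq ▸ hmono hq ⟨hq.1.trans hqu, hu.2⟩ hqu
  have below : ∀ u ∈ Ioc p q, max (d - g u) 0 = d - g u := by
    intro u hu
    refine max_eq_left (sub_nonneg.2 ?_)
    rcases le_total u m with hum | hmu
    · exact hgp ▸ hanti hp ⟨hp.1.trans hu.1.le, hum⟩ hu.1.le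
    · exact hgq ▸ hmono ⟨hmu, hu.2.trans hq.2⟩ hq hu.2
  rw [integral_of_le hxy, integral_of_le hpq,
    setIntegral_eq_of_subset_of_forall_sdiff_eq_zero measurableSet_Ioc
      (Ioc_subset_Ioc hp.1 hq.2) above,
    setIntegral_congr_fun measurableSet_Ioc below]

theorem diagGap_comm (a b u : ℝ) : diagGap a b u = diagGap b a u := by
  simp only [diagGap, add_comm (max (a - u) 0)]

@[fun_prop]
theorem continuous_diagGap (a b : ℝ) : Continuous (diagGap a b) := by
  unfold diagGap
  fun_prop

theorem antitoneOn_diagGap (a b : ℝ) : AntitoneOn (diagGap a b) (Iic (1 / 2)) := by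
  intro u hu v hv huv
  rw [mem_Iic] at hu hv
  rw [diagGap, diagGap, max_eq_right (by linarith : 2 * u - 1 ≤ 0),
    max_eq_right (by linarith : 2 * v - 1 ≤ 0)]
  gcongr

theorem monotoneOn_diagGap (a b : ℝ) : MonotoneOn (diagGap a b) (Ici (1 / 2)) := by
  intro u hu v hv huv
  rw [mem_Ici] at hu hv
  -- The slope `2` of the last term outweighs the slopes of the other two, which are at least `-1`.
  have ha : max (a - u) 0 ≤ max (a - v) 0 + (v - u) := by grind
  have hb : max (b - u) 0 ≤ max (b - v) 0 + (v - u) := by grind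
  rw [diagGap, diagGap, max_eq_left (by linarith : 0 ≤ 2 * u - 1),
    max_eq_left (by linarith : 0 ≤ 2 * v - 1)]
  linarith

theorem diagGap_half_le (a b u : ℝ) : diagGap a b (1 / 2) ≤ diagGap a b u :=
  (le_total u (1 / 2)).elim (fun h => antitoneOn_diagGap a b h self_mem_Iic h)
    (fun h => monotoneOn_diagGap a b self_mem_Ici h h)

theorem integral_diagGap (a b x y : ℝ) :
    ∫ u in x..y, diagGap a b u =
      (max (a - x) 0 ^ 2 - max (a - y) 0 ^ 2) / 2 + (max (b - x) 0 ^ 2 - max (b - y) 0 ^ 2) / 2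
        + (max (2 * y - 1) 0 ^ 2 - max (2 * x - 1) 0 ^ 2) / 4 := by
  simp only [diagGap]
  rw [integral_add (Continuous.intervalIntegrable (by fun_prop) _ _)
      (Continuous.intervalIntegrable (by fun_prop) _ _),
    integral_add (Continuous.intervalIntegrable (by fun_prop) _ _)
      (Continuous.intervalIntegrable (by fun_prop) _ _),
    integral_max_sub_zero_s6, integral_max_sub_zero_s6, integral_max_two_mul_sub_one_zero]

theorem lowerC_diag (a b c u : ℝ) :
    lowerC a b c u u =
      max (2 * u - 1) 0 + max (max (a + b - 1) 0 + c - diagGap a b u) 0 := by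
  set d := max (a + b - 1) 0 + c with hd
  have hmin : min (min d (u - a + d)) (min (u - b + d) (u + u - a - b + d)) =
      d - max (a - u) 0 - max (b - u) 0 := by
    grind
  simp only [lowerC, diagGap, ← hd, hmin]
  grind

theorem concordance_lowerC (a b c : ℝ) :
    4 * (∫ u in (0 : ℝ)..1, lowerC a b c u u) - 1 = diagExcess a b (max (a + b - 1) 0 + c) := by
  simp only [lowerC_diag, diagExcess]
  rw [integral_add (Continuous.intervalIntegrable (by fun_prop) _ _)
      (Continuous.intervalIntegrable (by fun_prop) _ _), integral_max_two_mul_sub_one_zero]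
  have hW : (max (2 * 1 - 1) 0 ^ 2 - max (2 * 0 - 1) 0 ^ 2) / 4 = (1 / 4 : ℝ) := by norm_num
  rw [hW]
  ring

theorem diagExcess_comm (a b d : ℝ) : diagExcess a b d = diagExcess b a d := by
  simp only [diagExcess, diagGap_comm a b]

section

variable {a b d : ℝ}

theorem diagExcess_eq_of_diagGap_eq {p q : ℝ} (hp : p ∈ Icc 0 (1 / 2)) (hq : q ∈ Icc (1 / 2) 1)
    (hgp : diagGap a b p = d) (hgq : diagGap a b q = d) :
    diagExcess a b d =
      4 * d * (q - p) - 2 * (max (a - p) 0 ^ 2 - max (a - q) 0 ^ 2)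
        - 2 * (max (b - p) 0 ^ 2 - max (b - q) 0 ^ 2) - (2 * q - 1) ^ 2 := by
  rw [diagExcess, integral_max_sub_zero_of_antitoneOn_of_monotoneOn
      ((antitoneOn_diagGap a b).mono Icc_subset_Iic_self)
      ((monotoneOn_diagGap a b).mono Icc_subset_Ici_self) hp hq hgp hgq,
    integral_sub intervalIntegrable_const ((continuous_diagGap a b).intervalIntegrable p q),
    intervalIntegral.integral_const, integral_diagGap, smul_eq_mul,
    max_eq_right (by linarith [hp.2] : 2 * p - 1 ≤ 0),
    max_eq_left (by linarith [hq.1] : 0 ≤ 2 * q - 1)]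
  ring

theorem diagGap_sub (hd : 0 ≤ d) (hab : a ≤ b - d) (hb : b ≤ d + 1 / 2) :
    diagGap a b (b - d) = d := by
  simp only [diagGap]
  grind

theorem diagGap_add_sub_div_two (hab : a - b ≤ d) (hba : b - a ≤ d) (hd : a + b - 1 ≤ d) :
    diagGap a b ((a + b - d) / 2) = d := by
  simp only [diagGap]
  grind

theorem diagGap_one_sub_add (ha : a + b - 1 ≤ d) (hb : (1 + d) / 2 ≤ b) (hb' : b ≤ d + 1 / 2) :
    diagGap a b (1 - b + d) = d := by
  simp only [diagGap]
  grind

theorem diagGap_one_add_div_two (hd : 0 ≤ d) (ha : a ≤ (1 + d) / 2) (hb : b ≤ (1 + d) / 2) :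
    diagGap a b ((1 + d) / 2) = d := by
  simp only [diagGap]
  grind

theorem diagExcess_eq_zero (hb : d + 1 / 2 ≤ b) : diagExcess a b d = 0 := by
  have hgap (u : ℝ) : d ≤ diagGap a b u := by
    refine le_trans ?_ (diagGap_half_le a b u)
    simp only [diagGap]
    grind
  simp [diagExcess, hgap]

theorem diagExcess_eq_sq (hd : 0 ≤ d) (hdb : d ≤ b) (hb : (1 + d) / 2 ≤ b)
    (hb' : b ≤ d + 1 / 2) (hab : a ≤ b - d) :
    diagExcess a b d = (2 * d + 1 - 2 * b) ^ 2 := by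
  rw [diagExcess_eq_of_diagGap_eq (p := b - d) (q := 1 - b + d)
    ⟨by linarith, by linarith⟩ ⟨by linarith, by linarith⟩
    (diagGap_sub hd hab hb') (diagGap_one_sub_add (by linarith) hb hb'),
    max_eq_right (by linarith : a - (b - d) ≤ 0),
    max_eq_right (by linarith : a - (1 - b + d) ≤ 0),
    max_eq_left (by linarith : 0 ≤ b - (b - d)),
    max_eq_left (by linarith : 0 ≤ b - (1 - b + d))]
  ring

theorem diagExcess_eq_mul (hd : 0 ≤ d) (hdb : d ≤ b) (hdab : a + b - 1 ≤ d) (hb : (1 + d) / 2 ≤ b)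
    (hab : b - d ≤ a) :
    diagExcess a b d = (a + b - 1 - d) * (3 * b - 3 * d - a - 1) := by
  rw [diagExcess_eq_of_diagGap_eq (p := (a + b - d) / 2) (q := 1 - b + d)
    ⟨by linarith, by linarith⟩ ⟨by linarith, by linarith⟩
    (diagGap_add_sub_div_two (by linarith) (by linarith) hdab)
    (diagGap_one_sub_add hdab hb (by linarith)),
    max_eq_left (by linarith : 0 ≤ a - (a + b - d) / 2),
    max_eq_right (by linarith : a - (1 - b + d) ≤ 0),
    max_eq_left (by linarith : 0 ≤ b - (a + b - d) / 2),
    max_eq_left (by linarith : 0 ≤ b - (1 - b + d))]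
  ring

theorem diagExcess_eq_level_mul (hd : 0 ≤ d) (hdb : d ≤ b) (hb : b ≤ (1 + d) / 2)
    (hab : a ≤ b - d) :
    diagExcess a b d = d * (2 + 3 * d - 4 * b) := by
  rw [diagExcess_eq_of_diagGap_eq (p := b - d) (q := (1 + d) / 2)
    ⟨by linarith, by linarith⟩ ⟨by linarith, by linarith⟩
    (diagGap_sub hd hab (by linarith)) (diagGap_one_add_div_two hd (by linarith) hb),
    max_eq_right (by linarith : a - (b - d) ≤ 0),
    max_eq_right (by linarith : a - (1 + d) / 2 ≤ 0),
    max_eq_left (by linarith : 0 ≤ b - (b - d)),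
    max_eq_right (by linarith : b - (1 + d) / 2 ≤ 0)]
  ring

theorem diagExcess_eq_sub_sq (hd : d ≤ 1) (hdab : d ≤ a + b) (ha : a ≤ (1 + d) / 2)
    (hb : b ≤ (1 + d) / 2) (hab : a - b ≤ d) (hba : b - a ≤ d) :
    diagExcess a b d = 2 * d * (1 + d - a - b) - (a - b) ^ 2 := by
  rw [diagExcess_eq_of_diagGap_eq (p := (a + b - d) / 2) (q := (1 + d) / 2)
    ⟨by linarith, by linarith⟩ ⟨by linarith, by linarith⟩
    (diagGap_add_sub_div_two hab hba (by linarith))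
    (diagGap_one_add_div_two (by linarith) ha hb),
    max_eq_left (by linarith : 0 ≤ a - (a + b - d) / 2),
    max_eq_right (by linarith : a - (1 + d) / 2 ≤ 0),
    max_eq_left (by linarith : 0 ≤ b - (a + b - d) / 2),
    max_eq_right (by linarith : b - (1 + d) / 2 ≤ 0)]
  ring

end

theorem lowerC_level_bounds {a b c d : ℝ} (hc0 : 0 ≤ c)
    (hc : c ≤ min (min a b) (min (1 - a) (1 - b))) (hd : d = max (a + b - 1) 0 + c) :
    0 ≤ d ∧ d ≤ a ∧ d ≤ b ∧ a + b - 1 ≤ d := by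
  simp only [le_min_iff] at hc
  grind

theorem Q_M_lowerC (a b c d₁ Q : ℝ) (ha : a ∈ Set.Icc (0:ℝ) 1) (hb : b ∈ Set.Icc (0:ℝ) 1)
    (hc0 : 0 ≤ c) (hc : c ≤ min (min a b) (min (1 - a) (1 - b)))
    (hd : d₁ = max (a + b - 1) 0 + c)
    (hQ : Q = 4 * (∫ u in (0:ℝ)..1, lowerC a b c u u) - 1) :
    (b ≥ d₁ + 1/2 → Q = 0) ∧
    ((1 + d₁)/2 ≤ b → b ≤ d₁ + 1/2 → a ≤ b - d₁ → Q = (2*d₁ + 1 - 2*b)^2) ∧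
    ((1 + d₁)/2 ≤ b → b ≤ d₁ + 1/2 → a ≥ b - d₁ →
      Q = (a + b - 1 - d₁) * (3*b - 3*d₁ - a - 1)) ∧
    (b ≤ (1 + d₁)/2 → a ≤ b - d₁ → Q = d₁ * (2 + 3*d₁ - 4*b)) ∧
    (d₁ ≥ 2*a - 1 → d₁ ≥ 2*b - 1 → d₁ ≥ a - b → d₁ ≥ b - a →
      Q = 2*d₁*(1 + d₁ - a - b) - (a - b)^2) ∧
    (a ≤ (1 + d₁)/2 → b ≤ a - d₁ → Q = d₁ * (2 + 3*d₁ - 4*a)) ∧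
    ((1 + d₁)/2 ≤ a → a ≤ d₁ + 1/2 → b ≥ a - d₁ →
      Q = (a + b - 1 - d₁) * (3*a - 3*d₁ - b - 1)) ∧
    ((1 + d₁)/2 ≤ a → a ≤ d₁ + 1/2 → b ≤ a - d₁ → Q = (2*d₁ + 1 - 2*a)^2) ∧
    (a ≥ d₁ + 1/2 → Q = 0) := by
  obtain ⟨hd0, hda, hdb, hdab⟩ := lowerC_level_bounds hc0 hc hd
  have hdba : b + a - 1 ≤ d₁ := by linarith
  rw [concordance_lowerC, ← hd] at hQ
  have hQ' : Q = diagExcess b a d₁ := hQ.trans (diagExcess_comm a b d₁)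
  refine ⟨fun h => ?_, fun h₁ h₂ h₃ => ?_, fun h₁ _ h₃ => ?_, fun h₁ h₂ => ?_,
    fun h₁ h₂ h₃ h₄ => ?_, fun h₁ h₂ => ?_, fun h₁ _ h₃ => ?_, fun h₁ h₂ h₃ => ?_, fun h => ?_⟩
  · rw [hQ, diagExcess_eq_zero h]
  · rw [hQ, diagExcess_eq_sq hd0 hdb h₁ h₂ h₃]
  · rw [hQ, diagExcess_eq_mul hd0 hdb hdab h₁ h₃]
  · rw [hQ, diagExcess_eq_level_mul hd0 hdb h₁ h₂]
  · rw [hQ, diagExcess_eq_sub_sq (hda.trans ha.2) (by linarith) (by linarith) (by linarith) h₃ h₄]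
  · rw [hQ', diagExcess_eq_level_mul hd0 hda h₁ h₂]
  · rw [hQ', diagExcess_eq_mul hd0 hda hdba h₁ h₃, add_comm b a]
  · rw [hQ', diagExcess_eq_sq hd0 hda h₁ h₂ h₃]
  · rw [hQ', diagExcess_eq_zero h]
end

section
/- Let (a,b) ∈ [0,1]² and let c satisfy 0 ≤ c ≤ min{a,b,1−a,1−b}, and set d₂ = min{a,b} − c and Q = 4∫₀¹ C̄^{(a,b)}_c(u,1−u) du − 1. Then: Q = 0 if a+b−1/2 ≤ d₂; Q = −(2a+2b−2d₂−1)² if max{2a+b−1, a+2b−1} ≤ d₂ ≤ a+b−1/2; Q = −(4a+3b−3d₂−2)(b−d₂) if a+2b−1 ≤ d₂ ≤ 2a+b−1; Q = −(3a+4b−3d₂−2)(a−d₂) if 2a+b−1 ≤ d₂ ≤ a+2b−1; Q = (a−1)²+(b−1)²+2d₂(a+b−d₂)−1 if d₂ ≤ min{1−a, 1−b, 2a+b−1, a+2b−1}; Q = (a−d₂)(a+3d₂−2) if 1−b ≤ d₂ ≤ 1−a; Q = (b−d₂)(b+3d₂−2) if 1−a ≤ d₂ ≤ 1−b; Q = −(1−2d₂)²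 if max{1−a, 1−b} ≤ d₂ ≤ 1/2; Q = 0 if 1/2 ≤ d₂. -/
open Set MeasureTheory intervalIntegral

/-!
The gap between the comonotone copula `min` and `upperC a b c` is the positive part of
`min u v - d - (u - b)⁺ - (v - a)⁺` with `d = min a b - c`. Since `𝒬(W, min) = 0`, the concordance
is `-4` times the integral of this gap along the antidiagonal. That integral is unchanged under
`a ↔ b` and, by passing to survival copulas, under `(a, b, d) ↦ (1 - a, 1 - b, 1 - a - b + d)`.
Up to these two symmetries there are only three different regimes, and in each of them the gap is,
on either half of the antidiagonal, a combination of ramps `(u - t)⁺`.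
-/

lemma sq_posPart_sub_add_sq_posPart_sub {R : Type*} [CommRing R] [LinearOrder R]
    [IsOrderedAddMonoid R] (x y : R) : (x - y)⁺ ^ 2 + (y - x)⁺ ^ 2 = (x - y) ^ 2 := by
  rcases le_total x y with h | h
  · rw [posPart_eq_zero.2 (sub_nonpos.2 h), posPart_eq_self.2 (sub_nonneg.2 h)]
    ring
  · rw [posPart_eq_self.2 (sub_nonneg.2 h), posPart_eq_zero.2 (sub_nonpos.2 h)]
    ring

lemma hasDerivAt_sq_posPart (x : ℝ) : HasDerivAt (fun y : ℝ => y⁺ ^ 2) (2 * x⁺) x := by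
  have hcont : Continuous fun y : ℝ => y⁺ := continuous_posPart
  have hne : ∀ y ≠ (0 : ℝ), HasDerivAt (fun y : ℝ => y⁺ ^ 2) (2 * y⁺) y := by
    intro y hy
    rcases hy.lt_or_gt with hneg | hpos
    · rw [posPart_eq_zero.2 hneg.le, mul_zero]
      refine (hasDerivAt_const y (0 : ℝ)).congr_of_eventuallyEq ?_
      filter_upwards [Iio_mem_nhds hneg] with z hz
      rw [posPart_eq_zero.2 (mem_Iio.1 hz).le, zero_pow two_ne_zero]
    · rw [posPart_eq_self.2 hpos.le]
      refine HasDerivAt.congr_of_eventuallyEq (by simpa using hasDerivAt_pow 2 y) ?_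
      filter_upwards [Ioi_mem_nhds hpos] with z hz
      rw [posPart_eq_self.2 (mem_Ioi.1 hz).le]
  rcases eq_or_ne x 0 with rfl | hx
  · exact hasDerivAt_of_hasDerivAt_of_ne hne (hcont.pow 2).continuousAt
      (hcont.const_mul 2).continuousAt
  · exact hne x hx

lemma intervalIntegrable_posPart_sub (t x y : ℝ) :
    IntervalIntegrable (fun u : ℝ => (u - t)⁺) volume x y :=
  Continuous.intervalIntegrable (continuous_posPart.comp (by fun_prop)) x y

lemma integral_posPart_sub (t x y : ℝ) :
    ∫ u in x..y, (u - t)⁺ = ((y - t)⁺ ^ 2 - (x - t)⁺ ^ 2) / 2 := by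
  have hderiv : ∀ u ∈ uIcc x y, HasDerivAt (fun u : ℝ => (u - t)⁺ ^ 2 / 2) (u - t)⁺ u := by
    intro u _
    simpa using ((hasDerivAt_sq_posPart (u - t)).comp_sub_const u t).div_const 2
  rw [integral_eq_sub_of_hasDerivAt hderiv (intervalIntegrable_posPart_sub t x y), ← sub_div]

lemma integral_zero_posPart_sub {t : ℝ} (ht : 0 ≤ t) (y : ℝ) :
    ∫ u in (0:ℝ)..y, (u - t)⁺ = (y - t)⁺ ^ 2 / 2 := by
  rw [integral_posPart_sub, posPart_eq_zero.2 (by linarith : 0 - t ≤ 0)]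
  ring

lemma integral_eq_integral_left_half_add_reflect {E : Type*} [NormedAddCommGroup E]
    [NormedSpace ℝ E] {f : ℝ → E} {x y : ℝ} (hf : IntervalIntegrable f volume x y) :
    ∫ u in x..y, f u =
      (∫ u in x..(x + y) / 2, f u) + ∫ u in x..(x + y) / 2, f (x + y - u) := by
  have hmid : (x + y) / 2 ∈ uIcc x y := by
    rw [mem_uIcc]
    grind
  have hleft : IntervalIntegrable f volume x ((x + y) / 2) :=
    hf.mono_set (uIcc_subset_uIcc_left hmid)
  have hright : IntervalIntegrable f volume ((x + y) / 2) y :=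
    hf.mono_set (uIcc_subset_uIcc_right hmid)
  rw [intervalIntegral.integral_comp_sub_left, show x + y - (x + y) / 2 = (x + y) / 2 by ring,
    add_sub_cancel_left, integral_add_adjacent_intervals hleft hright]

/-- The concordance `𝒬(W, C)` of `C` with the lower Fréchet–Hoeffding bound `W`. -/
noncomputable def concordanceW (C : ℝ → ℝ → ℝ) : ℝ :=
  4 * (∫ u in (0:ℝ)..1, C u (1 - u)) - 1

lemma concordanceW_min : concordanceW min = 0 := by
  have hint : IntervalIntegrable (fun u : ℝ => min u (1 - u)) volume 0 1 :=
    Continuous.intervalIntegrable (by fun_prop) 0 1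
  have hhalf : ∫ u in (0:ℝ)..(1/2), min u (1 - u) = 1/8 := by
    rw [intervalIntegral.integral_congr (g := fun u => u)]
    · norm_num
    · intro u hu
      rw [uIcc_of_le (by norm_num)] at hu
      exact min_eq_left (by linarith [hu.2])
  rw [concordanceW, integral_eq_integral_left_half_add_reflect hint]
  simp only [zero_add, sub_sub_cancel, min_comm (1 - _ : ℝ), hhalf]
  norm_num

/-- The gap `min u v - upperC a b c u v` below the comonotone copula `min`, as a function of
`d = min a b - c`. -/
noncomputable def upperCGap (a b d u v : ℝ) : ℝ :=
  (min u v - d - (u - b)⁺ - (v - a)⁺)⁺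

lemma upperC_eq_min_sub_upperCGap (a b c u v : ℝ) :
    upperC a b c u v = min u v - upperCGap a b (min a b - c) u v := by
  simp only [upperC, upperCGap, posPart_def]
  generalize min a b - c = d
  grind

lemma upperCGap_swap (a b d u v : ℝ) : upperCGap a b d u v = upperCGap b a d v u := by
  rw [upperCGap, upperCGap, min_comm, sub_right_comm]

lemma upperCGap_survival (a b d u v : ℝ) :
    upperCGap (1 - a) (1 - b) (1 - a - b + d) (1 - u) (1 - v) = upperCGap a b d u v := by
  simp only [upperCGap, posPart_def]
  grind

/-- The integral of the gap between `min` and `upperC a b c` along the antidiagonal, as a function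
of `d = min a b - c`. -/
noncomputable def antidiagGap (a b d : ℝ) : ℝ :=
  ∫ u in (0:ℝ)..1, upperCGap a b d u (1 - u)

/-- The part of `antidiagGap a b d` over `[0, 1/2]`, where `min u (1 - u) = u`. -/
noncomputable def leftGap (a b d : ℝ) : ℝ :=
  ∫ u in (0:ℝ)..(1/2), (u - d - (u - b)⁺ - (1 - u - a)⁺)⁺

lemma intervalIntegrable_antidiag_upperCGap (a b d x y : ℝ) :
    IntervalIntegrable (fun u => upperCGap a b d u (1 - u)) volume x y := by
  refine Continuous.intervalIntegrable ?_ x y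
  simp only [upperCGap, posPart_def]
  fun_prop

lemma concordanceW_upperC (a b c : ℝ) :
    concordanceW (upperC a b c) = -4 * antidiagGap a b (min a b - c) := by
  have hmin : IntervalIntegrable (fun u : ℝ => min u (1 - u)) volume 0 1 :=
    Continuous.intervalIntegrable (by fun_prop) 0 1
  have hW := concordanceW_min
  simp only [concordanceW, upperC_eq_min_sub_upperCGap, antidiagGap] at hW ⊢
  rw [intervalIntegral.integral_sub hmin (intervalIntegrable_antidiag_upperCGap _ _ _ _ _)]
  linear_combination hW

lemma integral_antidiag_swap {E : Type*} [NormedAddCommGroup E] [NormedSpace ℝ E]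
    (F : ℝ → ℝ → E) : ∫ u in (0:ℝ)..1, F u (1 - u) = ∫ u in (0:ℝ)..1, F (1 - u) u := by
  simpa using (integral_comp_sub_left (a := 0) (b := 1) (fun u : ℝ => F u (1 - u)) 1).symm

lemma antidiagGap_comm (a b d : ℝ) : antidiagGap a b d = antidiagGap b a d := by
  simp only [antidiagGap, upperCGap_swap a b]
  exact integral_antidiag_swap fun u v => upperCGap b a d v u

lemma antidiagGap_survival (a b d : ℝ) :
    antidiagGap (1 - a) (1 - b) (1 - a - b + d) = antidiagGap a b d := by
  rw [antidiagGap, integral_antidiag_swap]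
  simp only [antidiagGap, ← upperCGap_survival a b d, sub_sub_cancel]

lemma antidiagGap_eq_leftGap_add_leftGap (a b d : ℝ) :
    antidiagGap a b d = leftGap a b d + leftGap b a d := by
  have hleft : ∀ a b : ℝ, ∫ u in (0:ℝ)..(1/2), upperCGap a b d u (1 - u) = leftGap a b d := by
    intro a b
    refine intervalIntegral.integral_congr fun u hu => ?_
    rw [uIcc_of_le (by norm_num)] at hu
    simp only [upperCGap, min_eq_left (by linarith [hu.2] : u ≤ 1 - u)]
  rw [antidiagGap, integral_eq_integral_left_half_add_reflect
    (intervalIntegrable_antidiag_upperCGap a b d 0 1)]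
  simp only [zero_add, sub_sub_cancel, hleft, upperCGap_swap a b d (1 - _)]

section

variable {a b d : ℝ}

lemma leftGap_of_one_sub_le (hd : 0 ≤ d) (had : 1 - a ≤ d) (hdb : d ≤ b) :
    leftGap a b d = ((1/2 - d)⁺ ^ 2 - (1/2 - b)⁺ ^ 2) / 2 := by
  have hramps : ∀ u : ℝ, (u - d - (u - b)⁺ - (1 - u - a)⁺)⁺ = (u - d)⁺ - (u - b)⁺ := by
    intro u
    simp only [posPart_def]
    grind
  simp only [leftGap, hramps]
  rw [intervalIntegral.integral_sub (intervalIntegrable_posPart_sub _ _ _)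
    (intervalIntegrable_posPart_sub _ _ _), integral_zero_posPart_sub hd,
    integral_zero_posPart_sub (hd.trans hdb), ← sub_div]

lemma leftGap_of_le_one_sub (hd : 0 ≤ d) (hda : d ≤ a) (had : d ≤ 1 - a)
    (hab : d ≤ a + 2 * b - 1) :
    leftGap a b d = (a - d) ^ 2 / 4 - ((1/2 - b)⁺ ^ 2 + (a - 1/2)⁺ ^ 2) / 2 := by
  -- The argument of the outer positive part is nondecreasing, with slope `2` up to `min b (1 - a)`;
  -- its zero `(1 - a + d) / 2` lies on this first piece.
  have hramps : ∀ u : ℝ, (u - d - (u - b)⁺ - (1 - u - a)⁺)⁺ =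
      2 * (u - (1 - a + d) / 2)⁺ - (u - b)⁺ - (u - (1 - a))⁺ := by
    intro u
    simp only [posPart_def]
    grind
  simp only [leftGap, hramps]
  rw [intervalIntegral.integral_sub
      (((intervalIntegrable_posPart_sub _ _ _).const_mul 2).sub
        (intervalIntegrable_posPart_sub _ _ _)) (intervalIntegrable_posPart_sub _ _ _),
    intervalIntegral.integral_sub ((intervalIntegrable_posPart_sub _ _ _).const_mul 2)
      (intervalIntegrable_posPart_sub _ _ _),
    intervalIntegral.integral_const_mul, integral_zero_posPart_sub (by linarith),
    integral_zero_posPart_sub (by linarith), integral_zero_posPart_sub (by linarith),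
    posPart_eq_self.2 (by linarith : 0 ≤ 1/2 - (1 - a + d) / 2),
    show 1/2 - (1 - a) = a - 1/2 by ring]
  ring

lemma antidiagGap_of_max_one_sub_le (hd : 0 ≤ d) (hda : d ≤ a) (hdb : d ≤ b)
    (h : max (1 - a) (1 - b) ≤ d) : antidiagGap a b d = (1/2 - d)⁺ ^ 2 := by
  obtain ⟨ha, hb⟩ := max_le_iff.1 h
  rw [antidiagGap_eq_leftGap_add_leftGap, leftGap_of_one_sub_le hd ha hdb,
    leftGap_of_one_sub_le hd hb hda, posPart_eq_zero.2 (by linarith : 1/2 - a ≤ 0),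
    posPart_eq_zero.2 (by linarith : 1/2 - b ≤ 0)]
  ring

lemma antidiagGap_of_one_sub_le (hd : 0 ≤ d) (hda : d ≤ a)
    (hb : 1 - b ≤ d) (ha : d ≤ 1 - a) : antidiagGap a b d = -(a - d) * (a + 3 * d - 2) / 4 := by
  rw [antidiagGap_eq_leftGap_add_leftGap, leftGap_of_one_sub_le hd hb hda,
    leftGap_of_le_one_sub hd hda ha (by linarith), posPart_eq_zero.2 (by linarith : 1/2 - b ≤ 0),
    posPart_eq_self.2 (by linarith : 0 ≤ 1/2 - d)]
  linear_combination -sq_posPart_sub_add_sq_posPart_sub a (1/2) / 2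

lemma antidiagGap_of_max_two_mul_add_le (hd : a + b - 1 ≤ d) (hda : d ≤ a)
    (hdb : d ≤ b) (h : max (2 * a + b - 1) (a + 2 * b - 1) ≤ d) :
    antidiagGap a b d = (a + b - 1/2 - d)⁺ ^ 2 := by
  obtain ⟨ha, hb⟩ := max_le_iff.1 h
  rw [← antidiagGap_survival, antidiagGap_of_max_one_sub_le (by linarith) (by linarith)
    (by linarith) (max_le (by linarith) (by linarith))]
  ring_nf

lemma antidiagGap_of_add_two_mul_le (hd : a + b - 1 ≤ d) (hdb : d ≤ b)
    (hb : a + 2 * b - 1 ≤ d) (ha : d ≤ 2 * a + b - 1) :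
    antidiagGap a b d = (4 * a + 3 * b - 3 * d - 2) * (b - d) / 4 := by
  rw [← antidiagGap_survival, antidiagGap_of_one_sub_le (by linarith) (by linarith)
    (by linarith) (by linarith)]
  ring

lemma antidiagGap_of_le_min (hd : 0 ≤ d)
    (h : d ≤ min (min (1 - a) (1 - b)) (min (2 * a + b - 1) (a + 2 * b - 1))) :
    antidiagGap a b d =
      (1 - (a - 1) ^ 2 - (b - 1) ^ 2 - 2 * d * (a + b - d)) / 4 := by
  simp only [le_min_iff] at h
  obtain ⟨⟨ha, hb⟩, hab, hba⟩ := h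
  rw [antidiagGap_eq_leftGap_add_leftGap, leftGap_of_le_one_sub hd (by linarith) ha hba,
    leftGap_of_le_one_sub hd (by linarith) hb (by linarith)]
  linear_combination -sq_posPart_sub_add_sq_posPart_sub a (1/2) / 2 -
    sq_posPart_sub_add_sq_posPart_sub b (1/2) / 2

end

theorem Q_W_upperC (a b c d₂ Q : ℝ) (ha : a ∈ Set.Icc (0:ℝ) 1) (hb : b ∈ Set.Icc (0:ℝ) 1)
    (hc0 : 0 ≤ c) (hc : c ≤ min (min a b) (min (1 - a) (1 - b)))
    (hd : d₂ = min a b - c)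
    (hQ : Q = 4 * (∫ u in (0:ℝ)..1, upperC a b c u (1 - u)) - 1) :
    (a + b - 1/2 ≤ d₂ → Q = 0) ∧
    (max (2*a + b - 1) (a + 2*b - 1) ≤ d₂ → d₂ ≤ a + b - 1/2 →
      Q = -(2*a + 2*b - 2*d₂ - 1)^2) ∧
    (a + 2*b - 1 ≤ d₂ → d₂ ≤ 2*a + b - 1 → Q = -(4*a + 3*b - 3*d₂ - 2) * (b - d₂)) ∧
    (2*a + b - 1 ≤ d₂ → d₂ ≤ a + 2*b - 1 → Q = -(3*a + 4*b - 3*d₂ - 2) * (a - d₂)) ∧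
    (d₂ ≤ min (min (1 - a) (1 - b)) (min (2*a + b - 1) (a + 2*b - 1)) →
      Q = (a - 1)^2 + (b - 1)^2 + 2*d₂*(a + b - d₂) - 1) ∧
    (1 - b ≤ d₂ → d₂ ≤ 1 - a → Q = (a - d₂) * (a + 3*d₂ - 2)) ∧
    (1 - a ≤ d₂ → d₂ ≤ 1 - b → Q = (b - d₂) * (b + 3*d₂ - 2)) ∧
    (max (1 - a) (1 - b) ≤ d₂ → d₂ ≤ 1/2 → Q = -(1 - 2*d₂)^2) ∧
    (1/2 ≤ d₂ → Q = 0) := by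
  obtain ⟨hd0, hda, hdb, hdab⟩ : 0 ≤ d₂ ∧ d₂ ≤ a ∧ d₂ ≤ b ∧ a + b - 1 ≤ d₂ := by grind
  replace hQ : Q = -4 * antidiagGap a b d₂ := hQ.trans (hd ▸ concordanceW_upperC a b c)
  have hQ' : Q = -4 * antidiagGap b a d₂ := antidiagGap_comm a b d₂ ▸ hQ
  refine ⟨fun h => ?_, fun h₁ h₂ => ?_, fun h₁ h₂ => ?_, fun h₁ h₂ => ?_, fun h => ?_,
    fun h₁ h₂ => ?_, fun h₁ h₂ => ?_, fun h₁ h₂ => ?_, fun h => ?_⟩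
  · rw [hQ, antidiagGap_of_max_two_mul_add_le hdab hda hdb (by grind),
      posPart_eq_zero.2 (by linarith), zero_pow two_ne_zero, mul_zero]
  · rw [hQ, antidiagGap_of_max_two_mul_add_le hdab hda hdb h₁, posPart_eq_self.2 (by linarith)]
    ring
  · linear_combination hQ - 4 * antidiagGap_of_add_two_mul_le hdab hdb h₁ h₂
  · linear_combination hQ' - 4 * antidiagGap_of_add_two_mul_le (by linarith) hda
      (by linarith) (by linarith : d₂ ≤ 2 * b + a - 1)
  · linear_combination hQ - 4 * antidiagGap_of_le_min hd0 h
  · linear_combination hQ - 4 * antidiagGap_of_one_sub_le hd0 hda h₁ h₂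
  · linear_combination hQ' - 4 * antidiagGap_of_one_sub_le hd0 hdb h₁ h₂
  · rw [hQ, antidiagGap_of_max_one_sub_le hd0 hda hdb h₁, posPart_eq_self.2 (by linarith)]
    ring
  · rw [hQ, antidiagGap_of_max_one_sub_le hd0 hda hdb (by grind),
      posPart_eq_zero.2 (by linarith), zero_pow two_ne_zero, mul_zero]
end

section
/- Let (a,b) ∈ [0,1]² and let c satisfy 0 ≤ c ≤ min{a,b,1−a,1−b}, and set d₂ = min{a,b} − c. Then 12∫₀¹∫₀¹ C̄^{(a,b)}_c(u,v) du dv − 3 = 1 − 6(a+b−2d₂)(a−d₂)(b−d₂); equivalently, Spearman's rho of C̄^{(a,b)}_c equals 1 − 6(a+b−2d₂)(a−d₂)(b−d₂). -/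
/-!
`upperC a b c` is a shuffle of min: it is the distribution function of the uniform measure on the
graph of the rearrangement `f` of `(0, 1]` that exchanges the adjacent blocks `(d₂, b]` and
`(b, a + b - d₂]`. If `X` and `Y` are uniform on `(0, 1]`, the layer cake formula gives
`∫∫ P(X ≤ u, Y ≤ v) dv du = E[(1 - X) (1 - Y)]`, and since `1 - X` and `1 - Y` both have second
moment `1/3`, polarization turns Spearman's rho into `1 - 6 E[(X - Y)²]`. Here `|t - f t|` is
`a - d₂` on the first block, of length `b - d₂`, is `b - d₂` on the second, of length `a - d₂`, and
vanishes elsewhere.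
-/

open Set MeasureTheory intervalIntegral

open ProbabilityTheory Function

section JointDistribution

variable {Ω : Type*} [MeasurableSpace Ω] {μ : Measure Ω} {X Y : Ω → ℝ}

theorem integral_indicator_Ici_const {α β y : ℝ} (hy : y ∈ Icc α β) (k : ℝ) :
    ∫ v in α..β, (Ici y).indicator (fun _ => k) v = (β - y) * k := by
  have hsplit : (Ioc α β ∩ Ici y : Set ℝ) =ᵐ[volume] Ioc y β := by
    have hIoi : Ioc α β ∩ Ioi y = Ioc y β := by grind
    exact hIoi ▸ (ae_eq_refl _).inter Ioi_ae_eq_Ici.symm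
  rw [integral_of_le (hy.1.trans hy.2), setIntegral_indicator measurableSet_Ici,
    setIntegral_congr_set hsplit, setIntegral_const, Real.volume_real_Ioc_of_le hy.2, smul_eq_mul]

theorem integral_setIntegral_le [SFinite μ] {h : Ω → ℝ} {α β : ℝ} (hY : AEMeasurable Y μ)
    (hY_mem : ∀ᵐ ω ∂μ, Y ω ∈ Icc α β) (hh : Integrable h μ) :
    ∫ v in α..β, ∫ ω in {ω | Y ω ≤ v}, h ω ∂μ = ∫ ω, (β - Y ω) * h ω ∂μ := by
  have hnull (v : ℝ) : NullMeasurableSet {ω | Y ω ≤ v} μ :=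
    nullMeasurableSet_le hY aemeasurable_const
  have hint : Integrable (uncurry fun v ω => (Ici (Y ω)).indicator (fun _ => h ω) v)
      ((volume.restrict (uIoc α β)).prod μ) := by
    have : IsFiniteMeasure (volume.restrict (uIoc α β)) := by unfold uIoc; infer_instance
    have hset : NullMeasurableSet {p : ℝ × Ω | Y p.2 ≤ p.1}
        ((volume.restrict (uIoc α β)).prod μ) :=
      nullMeasurableSet_le hY.comp_snd measurable_fst.aemeasurable
    exact (hh.comp_snd (volume.restrict (uIoc α β))).indicator₀ hset
  calc ∫ v in α..β, ∫ ω in {ω | Y ω ≤ v}, h ω ∂μ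
    _ = ∫ v in α..β, ∫ ω, (Ici (Y ω)).indicator (fun _ => h ω) v ∂μ :=
        integral_congr fun v _ => (integral_indicator₀ (hnull v)).symm
    _ = ∫ ω, (∫ v in α..β, (Ici (Y ω)).indicator (fun _ => h ω) v) ∂μ :=
        intervalIntegral_integral_swap hint
    _ = ∫ ω, (β - Y ω) * h ω ∂μ :=
        integral_congr_ae <| hY_mem.mono fun ω hω => integral_indicator_Ici_const hω (h ω)

theorem integral_integral_measureReal_le_and_le [IsFiniteMeasure μ] {α β γ δ : ℝ}
    (hX : AEMeasurable X μ) (hY : AEMeasurable Y μ)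
    (hX_mem : ∀ᵐ ω ∂μ, X ω ∈ Icc α β) (hY_mem : ∀ᵐ ω ∂μ, Y ω ∈ Icc γ δ) :
    ∫ u in α..β, ∫ v in γ..δ, μ.real {ω | X ω ≤ u ∧ Y ω ≤ v} =
      ∫ ω, (β - X ω) * (δ - Y ω) ∂μ := by
  have hinner (u : ℝ) : ∫ v in γ..δ, μ.real {ω | X ω ≤ u ∧ Y ω ≤ v} =
      ∫ ω in {ω | X ω ≤ u}, (δ - Y ω) ∂μ := by
    have hlayer := integral_setIntegral_le (μ := μ.restrict {ω | X ω ≤ u}) (h := 1)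
      hY.restrict (ae_restrict_of_ae hY_mem) (integrable_const 1)
    have hnullY (v : ℝ) : NullMeasurableSet {ω | Y ω ≤ v} (μ.restrict {ω | X ω ≤ u}) :=
      nullMeasurableSet_le hY.restrict aemeasurable_const
    simpa only [Pi.one_apply, setIntegral_const, smul_eq_mul, mul_one,
      measureReal_restrict_apply₀ (hnullY _), ← ofPred_and, and_comm] using hlayer
  simp only [hinner]
  refine integral_setIntegral_le hX hX_mem (Integrable.sub (integrable_const δ) ?_)
  exact .of_mem_Icc γ δ hY hY_mem

theorem ae_mem_Icc_of_hasLaw_uniform (hX : HasLaw X (volume.restrict (Ioc (0 : ℝ) 1)) μ) :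
    ∀ᵐ ω ∂μ, X ω ∈ Icc (0 : ℝ) 1 :=
  (hX.ae_iff measurableSet_Icc.mem).2 <|
    (ae_restrict_mem measurableSet_Ioc).mono fun _ ht => Ioc_subset_Icc_self ht

theorem integral_one_sub_sq_of_hasLaw_uniform
    (hX : HasLaw X (volume.restrict (Ioc (0 : ℝ) 1)) μ) :
    ∫ ω, (1 - X ω) ^ 2 ∂μ = 1 / 3 := by
  have hcomp := hX.integral_comp (f := fun t => (1 - t) ^ 2) (by fun_prop)
  simp only [comp_def] at hcomp
  rw [hcomp, ← integral_of_le zero_le_one,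
    integral_comp_sub_left (fun t => t ^ 2) 1, integral_pow]
  norm_num

theorem spearmanRho_eq_one_sub_integral_sq {C : ℝ → ℝ → ℝ}
    (hX : HasLaw X (volume.restrict (Ioc (0 : ℝ) 1)) μ)
    (hY : HasLaw Y (volume.restrict (Ioc (0 : ℝ) 1)) μ)
    (hC : ∀ u ∈ Icc (0 : ℝ) 1, ∀ v ∈ Icc (0 : ℝ) 1, C u v = μ.real {ω | X ω ≤ u ∧ Y ω ≤ v}) :
    spearmanRho C = 1 - 6 * ∫ ω, (X ω - Y ω) ^ 2 ∂μ := by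
  have : IsFiniteMeasure μ := hX.isFiniteMeasure
  have hX_mem := ae_mem_Icc_of_hasLaw_uniform hX
  have hY_mem := ae_mem_Icc_of_hasLaw_uniform hY
  have hX_L2 : MemLp (fun ω => 1 - X ω) 2 μ := (memLp_const 1).sub <|
    memLp_of_bounded hX_mem hX.aemeasurable.aestronglyMeasurable 2
  have hY_L2 : MemLp (fun ω => 1 - Y ω) 2 μ := (memLp_const 1).sub <|
    memLp_of_bounded hY_mem hY.aemeasurable.aestronglyMeasurable 2
  have hC_integral : ∫ u in (0 : ℝ)..1, ∫ v in (0 : ℝ)..1, C u v =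
      ∫ ω, (1 - X ω) * (1 - Y ω) ∂μ := by
    rw [← integral_integral_measureReal_le_and_le hX.aemeasurable hY.aemeasurable hX_mem hY_mem]
    refine integral_congr fun u hu => integral_congr fun v hv => ?_
    rw [uIcc_of_le zero_le_one] at hu hv
    exact hC u hu v hv
  have hpolar : ∫ ω, (X ω - Y ω) ^ 2 ∂μ = ∫ ω, (1 - X ω) ^ 2 ∂μ + ∫ ω, (1 - Y ω) ^ 2 ∂μ -
      2 * ∫ ω, (1 - X ω) * (1 - Y ω) ∂μ := by
    have hcross : Integrable (fun ω => 2 * ((1 - X ω) * (1 - Y ω))) μ :=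
      (hX_L2.integrable_mul hY_L2).const_mul 2
    rw [← MeasureTheory.integral_const_mul, ← integral_add hX_L2.integrable_sq hY_L2.integrable_sq,
      ← integral_sub (hX_L2.integrable_sq.fun_add hY_L2.integrable_sq) hcross]
    congr with ω
    ring
  rw [integral_one_sub_sq_of_hasLaw_uniform hX, integral_one_sub_sq_of_hasLaw_uniform hY] at hpolar
  rw [spearmanRho, hC_integral]
  linarith

end JointDistribution

section Translation

variable {f : ℝ → ℝ} {x y z s : ℝ}

theorem volume_restrict_Ioc_add (hxy : x ≤ y) (hyz : y ≤ z) :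
    (volume.restrict (Ioc x z) : Measure ℝ) =
      volume.restrict (Ioc x y) + volume.restrict (Ioc y z) := by
  rw [← Ioc_union_Ioc_eq_Ioc hxy hyz,
    Measure.restrict_union (Ioc_disjoint_Ioc_of_le le_rfl) measurableSet_Ioc]

theorem map_volume_restrict_Ioc_of_translation (hf : ∀ t ∈ Ioc x y, f t = t + s) :
    (volume.restrict (Ioc x y)).map f = volume.restrict (Ioc (x + s) (y + s)) := by
  have htrans := (measurePreserving_add_right volume s).restrict_preimage
    (measurableSet_Ioc (a := x + s) (b := y + s))
  rw [preimage_add_const_Ioc, add_sub_cancel_right, add_sub_cancel_right] at htrans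
  rw [Measure.map_congr (ae_restrict_of_forall_mem measurableSet_Ioc hf), htrans.map_eq]

theorem volume_restrict_Ioc_real_of_translation (hf : ∀ t ∈ Ioc x y, f t = t + s) (u v : ℝ) :
    (volume.restrict (Ioc x y)).real {t | t ≤ u ∧ f t ≤ v} =
      max (min y (min u (v - s)) - x) 0 := by
  have hinter : {t | t ≤ u ∧ f t ≤ v} ∩ Ioc x y = Ioc x (min y (min u (v - s))) := by
    grind
  rw [measureReal_restrict_apply' measurableSet_Ioc, hinter, Real.volume_real_Ioc]

end Translation

/-- The interval exchange of the line that translates `(d, b]` onto `(a, a + b - d]` and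
`(b, a + b - d]` onto `(d, a]`. The parameters are those of the shuffle `upperC a b c`, with
`d = min a b - c`. -/
noncomputable def blockSwap (a b d t : ℝ) : ℝ :=
  if t ≤ d then t else if t ≤ b then t + (a - d) else if t ≤ a + b - d then t + (d - b) else t

section BlockSwap

variable {a b d : ℝ}

theorem measurable_blockSwap : Measurable (blockSwap a b d) := by
  unfold blockSwap
  exact .ite measurableSet_Iic (by fun_prop) <| .ite measurableSet_Iic (by fun_prop) <|
    .ite measurableSet_Iic (by fun_prop) (by fun_prop)

-- The zero shift stays explicit so that all four blocks are instances of the translation lemmas.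
theorem blockSwap_of_le {t : ℝ} (ht : t ≤ d) : blockSwap a b d t = t + 0 := by
  grind [blockSwap]

theorem blockSwap_of_mem_fst {t : ℝ} (ht : t ∈ Ioc d b) : blockSwap a b d t = t + (a - d) := by
  grind [blockSwap]

theorem blockSwap_of_mem_snd {t : ℝ} (hdb : d ≤ b) (ht : t ∈ Ioc b (a + b - d)) :
    blockSwap a b d t = t + (d - b) := by
  grind [blockSwap]

theorem blockSwap_of_lt {t : ℝ} (hda : d ≤ a) (ht : a + b - d < t) :
    blockSwap a b d t = t + 0 := by
  grind [blockSwap]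

theorem volume_restrict_Ioc_zero_one_eq_blocks (hd : 0 ≤ d) (hda : d ≤ a) (hdb : d ≤ b)
    (h1 : a + b - d ≤ 1) :
    (volume.restrict (Ioc 0 1) : Measure ℝ) = volume.restrict (Ioc 0 d) +
      (volume.restrict (Ioc d b) + (volume.restrict (Ioc b (a + b - d)) +
        volume.restrict (Ioc (a + b - d) 1))) := by
  rw [← volume_restrict_Ioc_add (by linarith) h1, ← volume_restrict_Ioc_add hdb (by linarith),
    ← volume_restrict_Ioc_add hd (by linarith)]

theorem hasLaw_blockSwap (hd : 0 ≤ d) (hda : d ≤ a) (hdb : d ≤ b) (h1 : a + b - d ≤ 1) :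
    HasLaw (blockSwap a b d) (volume.restrict (Ioc 0 1)) (volume.restrict (Ioc 0 1)) where
  aemeasurable := measurable_blockSwap.aemeasurable
  map_eq := by
    have hmeas := measurable_blockSwap (a := a) (b := b) (d := d)
    have htarget := volume_restrict_Ioc_zero_one_eq_blocks (a := b) (b := a) hd hdb hda
      (by linarith)
    nth_rw 1 [volume_restrict_Ioc_zero_one_eq_blocks hd hda hdb h1]
    rw [htarget, Measure.map_add _ _ hmeas, Measure.map_add _ _ hmeas, Measure.map_add _ _ hmeas,
      map_volume_restrict_Ioc_of_translation fun t ht => blockSwap_of_le ht.2,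
      map_volume_restrict_Ioc_of_translation fun t ht => blockSwap_of_mem_fst ht,
      map_volume_restrict_Ioc_of_translation fun t ht => blockSwap_of_mem_snd hdb ht,
      map_volume_restrict_Ioc_of_translation fun t ht => blockSwap_of_lt hda ht.1]
    ring_nf
    abel

theorem add_block_contributions (hda : d ≤ a) (hdb : d ≤ b) (u v : ℝ) :
    min d (min u v) + (max (min b (min u (v - (a - d))) - d) 0 +
      (max (min (a + b - d) (min u (v - (d - b))) - b) 0 + max (min u v - (a + b - d)) 0)) =
    min (min u v) (d + max (u - b) 0 + max (v - a) 0) := by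
  rcases le_total u b with hub | hbu <;> rcases le_total v a with hva | hav
  · have hsnd : max (min b (min u (v - (a - d))) - d) 0 = 0 := by grind
    have hthird : max (min (a + b - d) (min u (v - (d - b))) - b) 0 = 0 := by grind
    have hlast : max (min u v - (a + b - d)) 0 = 0 := by grind
    grind
  · have hthird : max (min (a + b - d) (min u (v - (d - b))) - b) 0 = 0 := by grind
    have hlast : max (min u v - (a + b - d)) 0 = 0 := by grind
    grind
  · have hsnd : max (min b (min u (v - (a - d))) - d) 0 = 0 := by grind
    have hlast : max (min u v - (a + b - d)) 0 = 0 := by grind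
    grind
  · have hsnd : max (min b (min u (v - (a - d))) - d) 0 = min b (v - (a - d)) - d := by grind
    have hthird : max (min (a + b - d) (min u (v - (d - b))) - b) 0 = min (a + b - d) u - b := by
      grind
    grind

theorem uniform_real_le_and_blockSwap_le (hd : 0 ≤ d) (hda : d ≤ a) (hdb : d ≤ b)
    (h1 : a + b - d ≤ 1) {u v : ℝ} (hu : u ∈ Icc 0 1) (hv : v ∈ Icc 0 1) :
    (volume.restrict (Ioc 0 1)).real {t | t ≤ u ∧ blockSwap a b d t ≤ v} =
      min (min u v) (d + max (u - b) 0 + max (v - a) 0) := by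
  rw [volume_restrict_Ioc_zero_one_eq_blocks hd hda hdb h1, measureReal_add_apply,
    measureReal_add_apply, measureReal_add_apply,
    volume_restrict_Ioc_real_of_translation fun t ht => blockSwap_of_le ht.2,
    volume_restrict_Ioc_real_of_translation fun t ht => blockSwap_of_mem_fst ht,
    volume_restrict_Ioc_real_of_translation fun t ht => blockSwap_of_mem_snd hdb ht,
    volume_restrict_Ioc_real_of_translation fun t ht => blockSwap_of_lt hda ht.1]
  rw [sub_zero, sub_zero, min_eq_right (min_le_of_left_le hu.2),
    max_eq_left (le_min hd (le_min hu.1 hv.1)), add_block_contributions hda hdb]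

theorem sub_blockSwap_sq (hdb : d ≤ b) (t : ℝ) :
    (t - blockSwap a b d t) ^ 2 = (Ioc d b).indicator (fun _ => (a - d) ^ 2) t +
      (Ioc b (a + b - d)).indicator (fun _ => (b - d) ^ 2) t := by
  simp only [indicator_apply]
  grind [blockSwap]

theorem integral_sub_blockSwap_sq (hd : 0 ≤ d) (hda : d ≤ a) (hdb : d ≤ b) (h1 : a + b - d ≤ 1) :
    ∫ t in Ioc 0 1, (t - blockSwap a b d t) ^ 2 = (a + b - 2 * d) * (a - d) * (b - d) := by
  have hfst : Ioc d b ⊆ Ioc 0 1 := Ioc_subset_Ioc hd (by linarith)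
  have hsnd : Ioc b (a + b - d) ⊆ Ioc 0 1 := Ioc_subset_Ioc (by linarith) h1
  simp only [sub_blockSwap_sq hdb]
  rw [integral_add ((integrable_const _).indicator measurableSet_Ioc)
      ((integrable_const _).indicator measurableSet_Ioc),
    setIntegral_indicator measurableSet_Ioc, setIntegral_indicator measurableSet_Ioc,
    inter_eq_right.2 hfst, inter_eq_right.2 hsnd, setIntegral_const, setIntegral_const,
    Real.volume_real_Ioc_of_le hdb, Real.volume_real_Ioc_of_le (by linarith)]
  simp only [smul_eq_mul]
  ring

end BlockSwap

theorem upperC_eq_min (a b c u v : ℝ) :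
    upperC a b c u v = min (min u v) (min a b - c + max (u - b) 0 + max (v - a) 0) := by
  grind [upperC]

theorem rho_upperC (a b c d₂ : ℝ) (ha : a ∈ Set.Icc (0:ℝ) 1) (hb : b ∈ Set.Icc (0:ℝ) 1)
    (hc0 : 0 ≤ c) (hc : c ≤ min (min a b) (min (1 - a) (1 - b)))
    (hd : d₂ = min a b - c) :
    12 * (∫ u in (0:ℝ)..1, ∫ v in (0:ℝ)..1, upperC a b c u v) - 3
      = 1 - 6 * (a + b - 2*d₂) * (a - d₂) * (b - d₂) ∧
    spearmanRho (upperC a b c) = 1 - 6 * (a + b - 2*d₂) * (a - d₂) * (b - d₂) := by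
  rw [spearmanRho, and_self, ← spearmanRho]
  have hd0 : 0 ≤ d₂ := by linarith [hc.trans (min_le_left _ _)]
  have hda : d₂ ≤ a := by linarith [min_le_left a b]
  have hdb : d₂ ≤ b := by linarith [min_le_right a b]
  have hd1 : a + b - d₂ ≤ 1 := by grind
  have hcdf : ∀ u ∈ Icc (0 : ℝ) 1, ∀ v ∈ Icc (0 : ℝ) 1, upperC a b c u v =
      (volume.restrict (Ioc 0 1)).real {t | id t ≤ u ∧ blockSwap a b d₂ t ≤ v} := by
    intro u hu v hv
    rw [upperC_eq_min, ← hd]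
    exact (uniform_real_le_and_blockSwap_le hd0 hda hdb hd1 hu hv).symm
  rw [spearmanRho_eq_one_sub_integral_sq .id (hasLaw_blockSwap hd0 hda hdb hd1) hcdf]
  simp only [id, integral_sub_blockSwap_sq hd0 hda hdb hd1]
  ring
end

section
/- Let m ∈ [0,1/3]. For every (a,b) ∈ Δ_m, Spearman's rho of the lower bound copula satisfies ρ(C̲^{(a,b)}_m) ≥ 12m³ − 1, and equality holds at (a,b) = (m, 1−m), i.e. ρ(C̲^{(m,1−m)}_m) = 12m³ − 1. -/
/-!
In the coordinates `x = u - a`, `y = v - b`, and with `e = a + b - 1`, the lower bound function is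
`max W (e⁺ + c - x⁻ - y⁻)`, where `W = (x + y + e)⁺` is the Fréchet–Hoeffding lower bound. Since
`W ≤ (x + y)⁺ + e⁺`, it dominates `W` plus the pyramid `(c - x⁻ - y⁻ - (x + y)⁺)⁺`, and equals this
sum if `e = 0`. The hexagonal base of the pyramid lies in the unit square and has area `3 * c ^ 2`,
so the volume of the pyramid is `c ^ 3`, while `W` has Spearman's rho `-1`.
-/

open Set MeasureTheory intervalIntegral

/-- The Fréchet–Hoeffding lower bound `W`, the pointwise smallest copula. -/
noncomputable def frechetHoeffdingLower (u v : ℝ) : ℝ :=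
  (u + v - 1)⁺

/-- The pyramid of height `c` with apex above the origin, whose base is the hexagon with vertices
`±(c, 0)`, `±(0, c)` and `±(c, -c)`. -/
noncomputable def hexPyramid (c x y : ℝ) : ℝ :=
  (c - x⁻ - y⁻ - (x + y)⁺)⁺

lemma continuous_frechetHoeffdingLower :
    Continuous (Function.uncurry frechetHoeffdingLower) := by
  unfold frechetHoeffdingLower Function.uncurry
  fun_prop

lemma continuous_hexPyramid_sub (a b c : ℝ) :
    Continuous (Function.uncurry fun u v => hexPyramid c (u - a) (v - b)) := by
  unfold hexPyramid Function.uncurry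
  fun_prop

lemma continuous_lowerC (a b c : ℝ) : Continuous (Function.uncurry (lowerC a b c)) := by
  unfold lowerC Function.uncurry
  fun_prop

lemma lowerC_eq_max (a b c u v : ℝ) :
    lowerC a b c u v
      = max (frechetHoeffdingLower u v) ((a + b - 1)⁺ + c - (u - a)⁻ - (v - b)⁻) := by
  have hmin (d x y : ℝ) :
      min (min d (x + d)) (min (y + d) (x + y + d)) = d - x⁻ - y⁻ := by
    simp only [negPart_def]
    grind
  have hsum : u + v - a - b = u - a + (v - b) := by ring
  rw [lowerC, hsum, hmin]
  rfl

lemma frechetHoeffdingLower_le_posPart_add_posPart (a b u v : ℝ) :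
    frechetHoeffdingLower u v ≤ (u - a + (v - b))⁺ + (a + b - 1)⁺ :=
  calc (u + v - 1)⁺ = (u - a + (v - b) + (a + b - 1))⁺ := by ring_nf
    _ ≤ (u - a + (v - b))⁺ + (a + b - 1)⁺ :=
      sup_le (add_le_add (le_posPart _) (le_posPart _))
        (add_nonneg (posPart_nonneg _) (posPart_nonneg _))

lemma frechetHoeffdingLower_add_hexPyramid_le_lowerC (a b c u v : ℝ) :
    frechetHoeffdingLower u v + hexPyramid c (u - a) (v - b) ≤ lowerC a b c u v := by
  rw [lowerC_eq_max, max_comm, sup_eq_add_posPart_sub]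
  refine add_le_add_right (posPart_mono ?_) _
  linarith [frechetHoeffdingLower_le_posPart_add_posPart a b u v]

lemma lowerC_eq_frechetHoeffdingLower_add_hexPyramid {a b : ℝ} (hab : a + b = 1) (c u v : ℝ) :
    lowerC a b c u v = frechetHoeffdingLower u v + hexPyramid c (u - a) (v - b) := by
  have hW : frechetHoeffdingLower u v = (u - a + (v - b))⁺ := by
    rw [frechetHoeffdingLower, ← hab]
    ring_nf
  rw [lowerC_eq_max, max_comm, sup_eq_add_posPart_sub, hexPyramid, ← hW, hab, sub_self,
    posPart_zero, zero_add]

section Volume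

lemma integral_posPart_sub_s10 {p q c : ℝ} (hp : p ≤ c) (hq : c ≤ q) :
    ∫ y in p..q, (y - c)⁺ = (q - c) ^ 2 / 2 := by
  have hcont : Continuous fun y : ℝ => (y - c)⁺ := by fun_prop
  have hleft : ∫ y in p..c, (y - c)⁺ = 0 := by
    refine integral_zero_ae (.of_forall fun y hy => ?_)
    rw [uIoc_of_le hp] at hy
    exact posPart_of_nonpos (sub_nonpos.2 hy.2)
  have hright : ∫ y in c..q, (y - c)⁺ = ∫ y in c..q, (y - c) := by
    refine integral_congr fun y hy => ?_
    rw [uIcc_of_le hq] at hy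
    exact posPart_of_nonneg (sub_nonneg.2 hy.1)
  rw [← integral_add_adjacent_intervals (hcont.intervalIntegrable p c)
    (hcont.intervalIntegrable c q), hleft, hright, integral_comp_sub_right (fun y => y),
    integral_id]
  ring

/-- The breakpoints `x⁻ - c`, `-x`, `0` and `c - x⁺` are the corners of the trapezoid that is the
section of the pyramid at `x`. -/
lemma hexPyramid_eq_ramps {c x : ℝ} (hx : |x| ≤ c) (y : ℝ) :
    hexPyramid c x y = (y - (x⁻ - c))⁺ - (y - -x)⁺ - (y - 0)⁺ + (y - (c - x⁺))⁺ := by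
  simp only [hexPyramid, posPart_def, negPart_def]
  grind

lemma hexPyramid_eq_zero {c x : ℝ} (hx : c ≤ |x|) (y : ℝ) : hexPyramid c x y = 0 := by
  simp only [hexPyramid, posPart_def, negPart_def]
  grind

lemma hexPyramid_zero_left (c y : ℝ) : hexPyramid c 0 y = (c - |y|)⁺ := by
  rw [hexPyramid, negPart_zero, sub_zero, zero_add, sub_sub, add_comm, posPart_add_negPart]

variable {c p q : ℝ}

lemma integral_hexPyramid (hp : p ≤ -c) (hq : c ≤ q) (x : ℝ) :
    ∫ y in p..q, hexPyramid c x y = c * (c - |x|)⁺ := by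
  rcases le_total |x| c with hx | hx
  · have hint (k : ℝ) : IntervalIntegrable (fun y : ℝ => (y - k)⁺) volume p q :=
      Continuous.intervalIntegrable (by fun_prop) p q
    have habs : x⁺ + x⁻ ≤ c := (posPart_add_negPart x).trans_le hx
    have hpos : 0 ≤ x⁺ := posPart_nonneg x
    have hneg : 0 ≤ x⁻ := negPart_nonneg x
    obtain ⟨hx₁, hx₂⟩ := abs_le.1 hx
    simp only [hexPyramid_eq_ramps hx]
    rw [intervalIntegral.integral_add (((hint _).sub (hint _)).sub (hint _)) (hint _),
      intervalIntegral.integral_sub ((hint _).sub (hint _)) (hint _),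
      intervalIntegral.integral_sub (hint _) (hint _),
      integral_posPart_sub_s10, integral_posPart_sub_s10, integral_posPart_sub_s10, integral_posPart_sub_s10,
      posPart_of_nonneg (sub_nonneg.2 hx)]
    · rcases le_total 0 x with h | h
      · rw [posPart_of_nonneg h, negPart_of_nonneg h, abs_of_nonneg h]
        ring
      · rw [posPart_of_nonpos h, negPart_of_nonpos h, abs_of_nonpos h]
        ring
    all_goals linarith
  · simp only [hexPyramid_eq_zero hx, intervalIntegral.integral_zero,
      posPart_of_nonpos (sub_nonpos.2 hx), mul_zero]

lemma integral_integral_hexPyramid {r s : ℝ} (hc : 0 ≤ c) (hp : p ≤ -c) (hq : c ≤ q)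
    (hr : r ≤ -c) (hs : c ≤ s) :
    ∫ x in p..q, ∫ y in r..s, hexPyramid c x y = c ^ 3 :=
  calc ∫ x in p..q, ∫ y in r..s, hexPyramid c x y
    _ = ∫ x in p..q, c * hexPyramid c 0 x := by
      simp only [integral_hexPyramid hr hs, hexPyramid_zero_left]
    _ = c * (c * (c - |0|)⁺) := by
      rw [intervalIntegral.integral_const_mul, integral_hexPyramid hp hq]
    _ = c ^ 3 := by
      rw [abs_zero, sub_zero, posPart_of_nonneg hc]
      ring

end Volume

section SpearmanRho

variable {C D : ℝ → ℝ → ℝ}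

lemma intervalIntegrable_section (hC : Continuous (Function.uncurry C)) (u p q : ℝ) :
    IntervalIntegrable (C u) volume p q :=
  (hC.uncurry_left u).intervalIntegrable p q

lemma intervalIntegrable_integral_section (hC : Continuous (Function.uncurry C))
    (p q r s : ℝ) :
    IntervalIntegrable (fun u => ∫ v in r..s, C u v) volume p q :=
  (continuous_parametric_intervalIntegral_of_continuous' hC r s).intervalIntegrable p q

lemma spearmanRho_mono (hC : Continuous (Function.uncurry C))
    (hD : Continuous (Function.uncurry D))
    (hCD : ∀ u ∈ Icc (0 : ℝ) 1, ∀ v ∈ Icc (0 : ℝ) 1, C u v ≤ D u v) :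
    spearmanRho C ≤ spearmanRho D := by
  unfold spearmanRho
  gcongr
  exact integral_mono_on zero_le_one (intervalIntegrable_integral_section hC 0 1 0 1)
    (intervalIntegrable_integral_section hD 0 1 0 1) fun u hu =>
      integral_mono_on zero_le_one (intervalIntegrable_section hC u 0 1)
        (intervalIntegrable_section hD u 0 1) (hCD u hu)

lemma spearmanRho_add (hC : Continuous (Function.uncurry C))
    (hD : Continuous (Function.uncurry D)) :
    spearmanRho (fun u v => C u v + D u v)
      = spearmanRho C + 12 * ∫ u in (0 : ℝ)..1, ∫ v in (0 : ℝ)..1, D u v := by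
  have hsection (u : ℝ) : ∫ v in (0 : ℝ)..1, (C u v + D u v)
      = (∫ v in (0 : ℝ)..1, C u v) + ∫ v in (0 : ℝ)..1, D u v :=
    intervalIntegral.integral_add (intervalIntegrable_section hC u 0 1)
      (intervalIntegrable_section hD u 0 1)
  simp only [spearmanRho, hsection]
  rw [intervalIntegral.integral_add (intervalIntegrable_integral_section hC 0 1 0 1)
    (intervalIntegrable_integral_section hD 0 1 0 1)]
  ring

lemma spearmanRho_frechetHoeffdingLower : spearmanRho frechetHoeffdingLower = -1 := by
  have hsection : ∀ u ∈ uIcc (0 : ℝ) 1,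
      ∫ v in (0 : ℝ)..1, frechetHoeffdingLower u v = u ^ 2 / 2 := by
    intro u hu
    rw [uIcc_of_le zero_le_one] at hu
    calc ∫ v in (0 : ℝ)..1, (u + v - 1)⁺ = ∫ v in (0 : ℝ)..1, (v - (1 - u))⁺ := by ring_nf
      _ = (1 - (1 - u)) ^ 2 / 2 :=
        integral_posPart_sub_s10 (sub_nonneg.2 hu.2) (sub_le_self 1 hu.1)
      _ = u ^ 2 / 2 := by ring
  rw [spearmanRho, integral_congr hsection, intervalIntegral.integral_div, integral_pow]
  norm_num

lemma spearmanRho_frechetHoeffdingLower_add_hexPyramid {a b c : ℝ} (hc : 0 ≤ c)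
    (ha : a ∈ Icc c (1 - c)) (hb : b ∈ Icc c (1 - c)) :
    spearmanRho (fun u v => frechetHoeffdingLower u v + hexPyramid c (u - a) (v - b))
      = 12 * c ^ 3 - 1 := by
  have hvolume :
      ∫ u in (0 : ℝ)..1, ∫ v in (0 : ℝ)..1, hexPyramid c (u - a) (v - b) = c ^ 3 := by
    simp only [integral_comp_sub_right (hexPyramid c _) b]
    rw [integral_comp_sub_right (fun x => ∫ y in (0 - b)..(1 - b), hexPyramid c x y) a]
    obtain ⟨ha₀, ha₁⟩ := ha
    obtain ⟨hb₀, hb₁⟩ := hb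
    apply integral_integral_hexPyramid hc <;> linarith
  rw [spearmanRho_add continuous_frechetHoeffdingLower (continuous_hexPyramid_sub a b c),
    spearmanRho_frechetHoeffdingLower, hvolume]
  ring

end SpearmanRho

theorem rho_lowerC_min_general {a b m : ℝ} (hm : 0 ≤ m) (ha : a ∈ Icc m (1 - m))
    (hb : b ∈ Icc m (1 - m)) :
    12 * m ^ 3 - 1 ≤ spearmanRho (lowerC a b m) ∧
      (a + b = 1 → spearmanRho (lowerC a b m) = 12 * m ^ 3 - 1) := by
  rw [← spearmanRho_frechetHoeffdingLower_add_hexPyramid hm ha hb]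
  constructor
  · exact spearmanRho_mono
      (continuous_frechetHoeffdingLower.add (continuous_hexPyramid_sub a b m))
      (continuous_lowerC a b m)
      fun u _ v _ => frechetHoeffdingLower_add_hexPyramid_le_lowerC a b m u v
  · intro hab
    congr 1
    ext u v
    exact lowerC_eq_frechetHoeffdingLower_add_hexPyramid hab m u v

theorem rho_lowerC_min (m : ℝ) (hm : m ∈ Set.Icc (0:ℝ) (1/3)) :
    (∀ a b : ℝ, a ∈ Set.Icc (0:ℝ) 1 → b ∈ Set.Icc (0:ℝ) 1 →
      m ≤ a → m ≤ b - a → a + b ≤ 1 →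
      12 * m^3 - 1 ≤ spearmanRho (lowerC a b m)) ∧
    spearmanRho (lowerC m (1 - m) m) = 12 * m^3 - 1 := by
  obtain ⟨hm₀, hm₁⟩ := hm
  constructor
  · intro a b _ _ hma hmb hab
    exact (rho_lowerC_min_general hm₀ ⟨hma, by linarith⟩ ⟨by linarith, by linarith⟩).1
  · exact (rho_lowerC_min_general hm₀ ⟨le_rfl, by linarith⟩ ⟨by linarith, le_rfl⟩).2
      (add_sub_cancel m 1)
end
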